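/- arXiv:1601.04032 — 3 statements merged into one kernel-verified Lean document; each statement's English description precedes it below -/
import Mathlib

section
/- Let α, β ∈ ℂ and let (p, q) be a transcendental solution on ℂ of the Hamiltonian system. For each cube root of unity ρ let Λ^ρ denote the set of poles of p at which the residue of p equals ρ, and let Λ be the set of all poles of p. Then for each ρ with ρ³ = 1, n(r, Λ^ρ) = (1/3)·n(r, Λ) + O(r²) as r → ∞. In particular, if for some cube root of unity ρ the set Λ^ρ is finite, then T(r, p) + T(r, q) = O(r²). -/
open Filter Topology Asymptotics

/-- The positive part of the logarithm, `log⁺ x = max 0 (log x)`. -/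
noncomputable def logPlus (x : ℝ) : ℝ := max 0 (Real.log x)

/-- The Nevanlinna proximity function
`m(r, f) = (2π)⁻¹ ∫₀^{2π} log⁺ |f(r e^{iθ})| dθ`. -/
noncomputable def proximity (f : ℂ → ℂ) (r : ℝ) : ℝ :=
  (2 * Real.pi)⁻¹ * ∫ θ in (0:ℝ)..(2 * Real.pi),
    logPlus ‖f ((r : ℂ) * Complex.exp ((θ : ℂ) * Complex.I))‖

/-- The multiplicity of `z₀` as a pole of `f`: the least `k` such that
`(z − z₀)^k · f(z)` has a finite limit at `z₀` (and `0` if there is no such `k`). -/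
noncomputable def poleMult (f : ℂ → ℂ) (z₀ : ℂ) : ℕ :=
  sInf {k : ℕ | ∃ c : ℂ, Tendsto (fun z => (z - z₀) ^ k * f z) (𝓝[≠] z₀) (𝓝 c)}

/-- The unintegrated counting function of poles,
`n(t, f) = Σ_{|z| ≤ t} (multiplicity of z as pole of f)`. -/
noncomputable def nPoles (f : ℂ → ℂ) (t : ℝ) : ℝ :=
  ∑ᶠ z ∈ Metric.closedBall (0 : ℂ) t, (poleMult f z : ℝ)

/-- The integrated counting function of poles,
`N(r, f) = ∫₀^r (n(t,f) − n(0,f))/t dt + n(0,f) log r`. -/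
noncomputable def countingN (f : ℂ → ℂ) (r : ℝ) : ℝ :=
  (∫ t in (0:ℝ)..r, (nPoles f t - nPoles f 0) / t) + nPoles f 0 * Real.log r

/-- The Nevanlinna characteristic `T(r, f) = m(r, f) + N(r, f)`. -/
noncomputable def nevT (f : ℂ → ℂ) (r : ℝ) : ℝ := proximity f r + countingN f r

/-- `(p, q)` is a (meromorphic) solution on `ℂ` of the Hamiltonian system
`p′ = −q² − z·p − α`, `q′ = p² + z·q + β`. -/
def IsHamSolution (α β : ℂ) (p q : ℂ → ℂ) : Prop :=
  MeromorphicOn p Set.univ ∧ MeromorphicOn q Set.univ ∧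
    ∀ z : ℂ, AnalyticAt ℂ p z → AnalyticAt ℂ q z →
      deriv p z = -(q z) ^ 2 - z * p z - α ∧ deriv q z = (p z) ^ 2 + z * q z + β

/-- A function is rational if it agrees with a quotient of polynomials away from
finitely many points. -/
def IsRationalFn (f : ℂ → ℂ) : Prop :=
  ∃ P Q : Polynomial ℂ, Q ≠ 0 ∧ ∀ᶠ z in Filter.cofinite, f z = P.eval z / Q.eval z

/-- `z₀` is a pole of `f`: `|f| → ∞` at `z₀`. -/
def IsPole (f : ℂ → ℂ) (z₀ : ℂ) : Prop :=
  Tendsto (fun z => ‖f z‖) (𝓝[≠] z₀) atTop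

/-- `f` has residue `ρ` at a simple pole `z₀`: `(z − z₀)·f(z) → ρ` at `z₀`. -/
def HasResidue (f : ℂ → ℂ) (z₀ ρ : ℂ) : Prop :=
  Tendsto (fun z => (z - z₀) * f z) (𝓝[≠] z₀) (𝓝 ρ)

/-- `n(r, S)`: the number of points of `S` in the closed disc of radius `r`. -/
noncomputable def setCount (S : Set ℂ) (r : ℝ) : ℝ :=
  ((S ∩ Metric.closedBall (0 : ℂ) r).ncard : ℝ)

/-- The closed sector `{t·e^{iθ} : t > 0, a ≤ θ ≤ b}`. -/
def ClosedSector (a b : ℝ) : Set ℂ :=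
  {z | ∃ t θ : ℝ, 0 < t ∧ a ≤ θ ∧ θ ≤ b ∧ z = (t : ℂ) * Complex.exp ((θ : ℂ) * Complex.I)}

/-!
Along a solution the Hamiltonian `H` satisfies `H′ = p q`. Near the poles `p q` is cancelled up to
lower order by the derivative of `p² / q`, and a smooth cutoff makes this correction bounded by
`O(|p| + |q|)` everywhere. Hence the corrected energy grows at most like `|z|³`, also across the
poles. Where `p` or `q` exceeds a large multiple of `|z|`, this bound forces `p³ ≈ -q³`, so that
`(1 / p)′ = q² / p² + ⋯` is close to a cube root of unity: the point lies within `O(1 / |z|)` of a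
simple pole `a`, poles are separated by a multiple of `1 / |a|`, and `p = O(|z|)` except near
poles, where `p = O(1 / |z - a|)`.

Averaging `∮ p` over the circles of radii between `r` and `r + 1 / r`, an annulus of bounded area
which contains `O(r²)` poles, bounds `∑ res p` over the disc `|z| ≤ r` by `O(r²)`. For cube roots of
unity `u` and `ρ`, the indicator of `u = ρ` is `(2 / 3) Re (conj ρ * u) + 1 / 3`, which turns this
bound into the asymptotics of `n(r, Λ^ρ)`. If some `n(r, Λ^ρ)` is `O(r²)`, then so is `n(r, Λ)`,
hence `N(r, p)` and `N(r, q)`. The proximity functions are always `O(r²)`: each of the `O(r²)` poles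
near the circle `|z| = r` contributes a bounded amount to the mean of `log⁺` over that circle.
-/

open ComplexConjugate

namespace HamSystem

noncomputable section

/-! ### The corrected energy -/

/-- The first component of the Hamiltonian vector field, `p′` along a solution. -/
def fieldP (α z p q : ℂ) : ℂ := -q ^ 2 - z * p - α

/-- The second component of the Hamiltonian vector field, `q′` along a solution. -/
def fieldQ (β z p q : ℂ) : ℂ := p ^ 2 + z * q + β

/-- The Hamiltonian; its derivative along a solution is `p q`. -/
def energy (α β z p q : ℂ) : ℂ := (p ^ 3 + q ^ 3) / 3 + z * p * q + α * q + β * p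

/-- The positive real number `1 + |p|² + |q|²`, encoded as a complex number built from `p`, `q`
and their conjugates so that the product rule applies to it. -/
def weight (p q : ℂ) : ℂ := p * conj p + q * conj q + 1

/-- The factor `4 |p|² |q|² / (1 + |p|² + |q|²)²`, which vanishes on `q = 0` and is close to `1`
where `|p|` and `|q|` are large and comparable, that is, near the poles of a solution. -/
def cutoff (p q : ℂ) : ℂ := 4 * (p * conj p) * (q * conj q) / weight p q ^ 2

/-- The directional derivative of `cutoff` at `(p, q)` along `(u, v)`. -/
def cutoffDeriv (p q u v : ℂ) : ℂ :=
  4 * ((p * conj p - q * conj q) *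
      (p * conj p * (v * conj q + q * conj v) - (u * conj p + p * conj u) * (q * conj q)) +
    (u * conj p + p * conj u) * (q * conj q) + p * conj p * (v * conj q + q * conj v)) /
  weight p q ^ 3

/-- The globally smooth version `(p² / q) * cutoff p q` of the term `p² / q`. Along a solution
the derivative of `p² / q` cancels the growth of the derivative `p q` of the energy near poles. -/
def correction (p q : ℂ) : ℂ := 4 * p ^ 3 * conj p * conj q / weight p q ^ 2

/-- The directional derivative of `correction` at `(p, q)` along `(u, v)`. -/
def correctionDeriv (p q u v : ℂ) : ℂ :=
  4 * (3 * p ^ 2 * u * conj p * conj q + p ^ 3 * conj u * conj q + p ^ 3 * conj p * conj v) /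
      weight p q ^ 2 -
    8 * p ^ 3 * conj p * conj q * (u * conj p + p * conj u + v * conj q + q * conj v) /
      weight p q ^ 3

/-- The Lyapunov function of the growth estimate: energy plus correction. -/
def correctedEnergy (α β z p q : ℂ) : ℂ := energy α β z p q + correction p q

/-- The derivative of `correctedEnergy` along a solution, on a line with direction `e`. -/
def correctedEnergyDeriv (α β e z p q : ℂ) : ℂ :=
  e * (p * q) + correctionDeriv p q (e * fieldP α z p q) (e * fieldQ β z p q)

/-- At the point `(z, p, q)` the independent variable, the parameters and the corrected energy
are bounded at scale `L`, each to the power given by its weight in the grading that gives `z`,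
`p`, `q` weight one. -/
structure EnergyBound (α β z p q : ℂ) (L : ℝ) : Prop where
  one_le : 1 ≤ L
  norm_z : ‖z‖ ≤ L
  norm_α : ‖α‖ ≤ L ^ 2
  norm_β : ‖β‖ ≤ L ^ 2
  norm_correctedEnergy : ‖correctedEnergy α β z p q‖ ≤ L ^ 3

lemma weight_eq_ofReal (p q : ℂ) : weight p q = ((‖p‖ ^ 2 + ‖q‖ ^ 2 + 1 : ℝ) : ℂ) := by
  simp only [weight, Complex.mul_conj', Complex.ofReal_add, Complex.ofReal_pow, Complex.ofReal_one]

lemma norm_weight (p q : ℂ) : ‖weight p q‖ = ‖p‖ ^ 2 + ‖q‖ ^ 2 + 1 := by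
  rw [weight_eq_ofReal, Complex.norm_real, Real.norm_of_nonneg (by positivity)]

lemma weight_ne_zero (p q : ℂ) : weight p q ≠ 0 := by
  rw [← norm_pos_iff, norm_weight]
  positivity

lemma norm_mul_conj (p : ℂ) : ‖p * conj p‖ = ‖p‖ ^ 2 := by
  rw [norm_mul, RCLike.norm_conj, sq]

lemma norm_mul_conj_add_mul_conj_le (u p : ℂ) : ‖u * conj p + p * conj u‖ ≤ 2 * (‖u‖ * ‖p‖) := by
  calc ‖u * conj p + p * conj u‖ ≤ ‖u * conj p‖ + ‖p * conj u‖ := norm_add_le _ _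
    _ = 2 * (‖u‖ * ‖p‖) := by simp only [norm_mul, RCLike.norm_conj]; ring

lemma norm_correction_le (p q : ℂ) : ‖correction p q‖ ≤ 4 * ‖q‖ := by
  have hp : ‖p‖ ^ 2 ≤ ‖p‖ ^ 2 + ‖q‖ ^ 2 + 1 := by nlinarith only [sq_nonneg ‖q‖]
  rw [correction, norm_div, norm_pow, norm_weight, div_le_iff₀ (by positivity)]
  simp only [norm_mul, norm_pow, RCLike.norm_conj, RCLike.norm_ofNat]
  calc 4 * ‖p‖ ^ 3 * ‖p‖ * ‖q‖ = 4 * ‖q‖ * (‖p‖ ^ 2) ^ 2 := by ring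
    _ ≤ 4 * ‖q‖ * (‖p‖ ^ 2 + ‖q‖ ^ 2 + 1) ^ 2 := by gcongr

lemma norm_correctionDeriv_le (p q u v : ℂ) :
    ‖correctionDeriv p q u v‖ ≤ 32 * (‖u‖ + ‖v‖) := by
  set D : ℝ := ‖p‖ ^ 2 + ‖q‖ ^ 2 + 1 with hD
  have : 0 < D := by positivity
  have hpq : ‖p‖ * ‖q‖ ≤ D := by nlinarith only [sq_nonneg (‖p‖ - ‖q‖), hD]
  have hpp : ‖p‖ ^ 2 ≤ D := by nlinarith only [sq_nonneg ‖q‖, hD]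
  have hqq : ‖q‖ ^ 2 ≤ D := by nlinarith only [sq_nonneg ‖p‖, hD]
  have h₁ : ‖4 * (3 * p ^ 2 * u * conj p * conj q + p ^ 3 * conj u * conj q +
      p ^ 3 * conj p * conj v) / weight p q ^ 2‖ ≤ 16 * (‖u‖ + ‖v‖) := by
    rw [norm_div, norm_pow, norm_weight, div_le_iff₀ (by positivity), norm_mul, RCLike.norm_ofNat]
    calc 4 * ‖3 * p ^ 2 * u * conj p * conj q + p ^ 3 * conj u * conj q + p ^ 3 * conj p * conj v‖
        ≤ 4 * (4 * (‖p‖ ^ 2 * (‖p‖ * ‖q‖) * ‖u‖) + ‖p‖ ^ 2 * ‖p‖ ^ 2 * ‖v‖) := by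
          gcongr
          refine norm_add₃_le.trans_eq ?_
          simp only [norm_mul, norm_pow, RCLike.norm_conj, RCLike.norm_ofNat]
          ring
      _ ≤ 4 * (4 * (D * D * ‖u‖) + D * D * ‖v‖) := by gcongr
      _ ≤ 16 * (‖u‖ + ‖v‖) * D ^ 2 := by nlinarith only [mul_nonneg (sq_nonneg D) (norm_nonneg v)]
  have h₂ : ‖8 * p ^ 3 * conj p * conj q * (u * conj p + p * conj u + v * conj q + q * conj v) /
      weight p q ^ 3‖ ≤ 16 * (‖u‖ + ‖v‖) := by
    rw [norm_div, norm_pow, norm_weight, div_le_iff₀ (by positivity), norm_mul, add_assoc]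
    calc ‖8 * p ^ 3 * conj p * conj q‖ * ‖u * conj p + p * conj u + (v * conj q + q * conj v)‖
        ≤ 8 * ‖p‖ ^ 4 * ‖q‖ * (2 * (‖u‖ * ‖p‖) + 2 * (‖v‖ * ‖q‖)) := by
          gcongr
          · simp only [norm_mul, norm_pow, RCLike.norm_conj, RCLike.norm_ofNat]
            exact le_of_eq (by ring)
          · exact (norm_add_le _ _).trans (add_le_add (norm_mul_conj_add_mul_conj_le u p)
              (norm_mul_conj_add_mul_conj_le v q))
      _ = 16 * (‖p‖ ^ 2 * ‖p‖ ^ 2 * (‖p‖ * ‖q‖) * ‖u‖ + ‖p‖ ^ 2 * ‖p‖ ^ 2 * ‖q‖ ^ 2 * ‖v‖) := by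
          ring
      _ ≤ 16 * (D * D * D * ‖u‖ + D * D * D * ‖v‖) := by gcongr
      _ = 16 * (‖u‖ + ‖v‖) * D ^ 3 := by ring
  calc ‖correctionDeriv p q u v‖ ≤ 16 * (‖u‖ + ‖v‖) + 16 * (‖u‖ + ‖v‖) :=
        (norm_sub_le _ _).trans (add_le_add h₁ h₂)
    _ = 32 * (‖u‖ + ‖v‖) := by ring

lemma correctionDeriv_eq {p q : ℂ} (hq : q ≠ 0) (u v : ℂ) :
    correctionDeriv p q u v =
      cutoff p q * ((2 * p * u * q - p ^ 2 * v) / q ^ 2) + p ^ 2 / q * cutoffDeriv p q u v := by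
  have hw := weight_ne_zero p q
  have hdef : weight p q = p * conj p + q * conj q + 1 := rfl
  unfold correctionDeriv cutoff cutoffDeriv
  field_simp
  rw [hdef]
  ring

lemma one_sub_cutoff (p q : ℂ) :
    1 - cutoff p q = ((p * conj p - q * conj q) ^ 2 + 2 * (p * conj p + q * conj q) + 1) /
      weight p q ^ 2 := by
  have hw := weight_ne_zero p q
  rw [cutoff, eq_div_iff (pow_ne_zero 2 hw), sub_mul, div_mul_cancel₀ _ (pow_ne_zero 2 hw), weight]
  ring

namespace EnergyBound

variable {α β z p q : ℂ} {L : ℝ}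

lemma norm_fieldP_le (h : EnergyBound α β z p q L) :
    ‖fieldP α z p q‖ ≤ ‖q‖ ^ 2 + L * ‖p‖ + L ^ 2 := by
  calc ‖fieldP α z p q‖ ≤ ‖-q ^ 2‖ + ‖z * p‖ + ‖α‖ :=
        (norm_sub_le _ _).trans (by gcongr; exact norm_sub_le _ _)
    _ = ‖q‖ ^ 2 + ‖z‖ * ‖p‖ + ‖α‖ := by rw [norm_neg, norm_pow, norm_mul]
    _ ≤ ‖q‖ ^ 2 + L * ‖p‖ + L ^ 2 := by gcongr; exacts [h.norm_z, h.norm_α]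

lemma norm_fieldQ_le (h : EnergyBound α β z p q L) :
    ‖fieldQ β z p q‖ ≤ ‖p‖ ^ 2 + L * ‖q‖ + L ^ 2 := by
  calc ‖fieldQ β z p q‖ ≤ ‖p ^ 2‖ + ‖z * q‖ + ‖β‖ := norm_add₃_le
    _ = ‖p‖ ^ 2 + ‖z‖ * ‖q‖ + ‖β‖ := by rw [norm_pow, norm_mul]
    _ ≤ ‖p‖ ^ 2 + L * ‖q‖ + L ^ 2 := by gcongr; exacts [h.norm_z, h.norm_β]

lemma norm_energy_le (h : EnergyBound α β z p q L) : ‖energy α β z p q‖ ≤ L ^ 3 + 4 * ‖q‖ := by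
  rw [← add_sub_cancel_right (energy α β z p q) (correction p q)]
  exact (norm_sub_le _ _).trans (add_le_add h.norm_correctedEnergy (norm_correction_le p q))

lemma norm_correctedEnergyDeriv_le_of_le (h : EnergyBound α β z p q L) {e : ℂ} (he : ‖e‖ = 1)
    (hS : ‖p‖ + ‖q‖ ≤ 100 * L) : ‖correctedEnergyDeriv α β e z p q‖ ≤ 10 ^ 7 * L ^ 2 := by
  have hL := h.one_le
  have hp := norm_nonneg p
  have hq := norm_nonneg q
  have hS₂ : (‖p‖ + ‖q‖) ^ 2 ≤ (100 * L) ^ 2 := by gcongr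
  have hS₁ : L * (‖p‖ + ‖q‖) ≤ L * (100 * L) := by gcongr
  have hcorr := norm_correctionDeriv_le p q (e * fieldP α z p q) (e * fieldQ β z p q)
  simp only [norm_mul, he, one_mul] at hcorr
  calc ‖correctedEnergyDeriv α β e z p q‖
      ≤ ‖p‖ * ‖q‖ + 32 * (‖fieldP α z p q‖ + ‖fieldQ β z p q‖) := by
        refine (norm_add_le _ _).trans (add_le_add (le_of_eq ?_) hcorr)
        simp only [norm_mul, he, one_mul]
    _ ≤ ‖p‖ * ‖q‖ + 32 * ((‖q‖ ^ 2 + L * ‖p‖ + L ^ 2) + (‖p‖ ^ 2 + L * ‖q‖ + L ^ 2)) := by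
        gcongr
        exacts [h.norm_fieldP_le, h.norm_fieldQ_le]
    _ ≤ 10 ^ 7 * L ^ 2 := by nlinarith only [hS₁, hS₂, mul_nonneg hp hq, sq_nonneg L]

variable (h : EnergyBound α β z p q L) (hS : 100 * L ≤ ‖p‖ + ‖q‖)
include h hS

lemma norm_lower_terms_le :
    ‖z‖ * ‖p‖ * ‖q‖ + ‖α‖ * ‖q‖ + ‖β‖ * ‖p‖ ≤ 13 / 50 * (L * (‖p‖ + ‖q‖) ^ 2) := by
  have hL := h.one_le
  have hαq : ‖α‖ * ‖q‖ ≤ L ^ 2 * ‖q‖ := by gcongr; exact h.norm_α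
  have hβp : ‖β‖ * ‖p‖ ≤ L ^ 2 * ‖p‖ := by gcongr; exact h.norm_β
  have hzpq : ‖z‖ * ‖p‖ * ‖q‖ ≤ L * (‖p‖ * ‖q‖) := by
    rw [mul_assoc]; gcongr; exact h.norm_z
  have hpq : L * (‖p‖ * ‖q‖) ≤ L * ((‖p‖ + ‖q‖) ^ 2 / 4) := by
    gcongr; nlinarith only [sq_nonneg (‖p‖ - ‖q‖)]
  have hquad : L * (‖p‖ + ‖q‖) * (100 * L) ≤ L * (‖p‖ + ‖q‖) * (‖p‖ + ‖q‖) := by gcongr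
  linarith only [hαq, hβp, hzpq, hpq, hquad]

lemma norm_cube_add_cube_le : ‖p ^ 3 + q ^ 3‖ ≤ L * (‖p‖ + ‖q‖) ^ 2 := by
  have hL := h.one_le
  have hlow := h.norm_lower_terms_le hS
  have hqS : ‖q‖ ≤ ‖p‖ + ‖q‖ := le_add_of_nonneg_left (norm_nonneg p)
  set S := ‖p‖ + ‖q‖
  have hcube : L * (100 * L) ^ 2 ≤ L * S ^ 2 := by gcongr
  have hlin : 1 * S * 100 ≤ L * S * S := by gcongr; linarith only [hS, hL]
  calc ‖p ^ 3 + q ^ 3‖ = ‖3 * (energy α β z p q - (z * p * q + α * q + β * p))‖ := by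
        rw [energy]; ring_nf
    _ ≤ 3 * (‖energy α β z p q‖ + ‖z * p * q + α * q + β * p‖) := by
        rw [norm_mul, RCLike.norm_ofNat]
        gcongr
        exact norm_sub_le _ _
    _ ≤ 3 * ((L ^ 3 + 4 * ‖q‖) + (‖z‖ * ‖p‖ * ‖q‖ + ‖α‖ * ‖q‖ + ‖β‖ * ‖p‖)) := by
        gcongr
        · exact h.norm_energy_le
        · exact norm_add₃_le.trans_eq (by simp only [norm_mul])
    _ ≤ L * S ^ 2 := by
        have : 0 ≤ L * S ^ 2 := by positivity
        linarith only [hcube, hlin, hqS, hlow, this]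

lemma abs_norm_sub_norm_le : |‖p‖ - ‖q‖| ≤ 4 / 3 * L := by
  have hL := h.one_le
  have hpos : 0 < (‖p‖ + ‖q‖) ^ 2 := pow_pos (by linarith only [hS, hL]) 2
  have hcubes : |‖p‖ ^ 3 - ‖q‖ ^ 3| ≤ L * (‖p‖ + ‖q‖) ^ 2 :=
    calc |‖p‖ ^ 3 - ‖q‖ ^ 3| = |‖p ^ 3‖ - ‖-q ^ 3‖| := by rw [norm_neg, norm_pow, norm_pow]
      _ ≤ ‖p ^ 3 - -q ^ 3‖ := _root_.abs_norm_sub_norm_le _ _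
      _ ≤ L * (‖p‖ + ‖q‖) ^ 2 := by rw [sub_neg_eq_add]; exact h.norm_cube_add_cube_le hS
  have hfactor : ‖p‖ ^ 3 - ‖q‖ ^ 3 = (‖p‖ - ‖q‖) * (‖p‖ ^ 2 + ‖p‖ * ‖q‖ + ‖q‖ ^ 2) := by ring
  rw [hfactor, abs_mul, abs_of_nonneg (a := ‖p‖ ^ 2 + _ + _) (by positivity)] at hcubes
  have hquad : 3 / 4 * (‖p‖ + ‖q‖) ^ 2 ≤ ‖p‖ ^ 2 + ‖p‖ * ‖q‖ + ‖q‖ ^ 2 := by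
    nlinarith only [sq_nonneg (‖p‖ - ‖q‖)]
  refine le_of_mul_le_mul_right ?_ hpos
  linarith only [hcubes, mul_le_mul_of_nonneg_left hquad (abs_nonneg (‖p‖ - ‖q‖))]

lemma norm_comparable :
    49 * L ≤ ‖p‖ ∧ 49 * L ≤ ‖q‖ ∧ ‖p‖ ≤ 1.03 * ‖q‖ ∧ ‖q‖ ≤ 1.03 * ‖p‖ := by
  have hL := h.one_le
  obtain ⟨hlower, hupper⟩ := abs_le.1 (h.abs_norm_sub_norm_le hS)
  refine ⟨?_, ?_, ?_, ?_⟩ <;> linarith only [hlower, hupper, hS, hL]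

lemma norm_field_le :
    ‖fieldP α z p q‖ ≤ 2 * (‖p‖ + ‖q‖) ^ 2 ∧ ‖fieldQ β z p q‖ ≤ 2 * (‖p‖ + ‖q‖) ^ 2 := by
  have hL := h.one_le
  have hp := norm_nonneg p
  have hq := norm_nonneg q
  have hsq : (100 * L) ^ 2 ≤ (‖p‖ + ‖q‖) ^ 2 := by gcongr
  have hlin : 100 * L * (‖p‖ + ‖q‖) ≤ (‖p‖ + ‖q‖) * (‖p‖ + ‖q‖) := by gcongr
  constructor
  · nlinarith only [h.norm_fieldP_le, hsq, hlin, mul_nonneg hp hq, hL, hp, hq]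
  · nlinarith only [h.norm_fieldQ_le, hsq, hlin, mul_nonneg hp hq, hL, hp, hq]

lemma norm_div_le : ‖p / q‖ ≤ 2 := by
  obtain ⟨-, hq, hpq, -⟩ := h.norm_comparable hS
  have hpos : 0 < ‖q‖ := by linarith only [hq, h.one_le]
  rw [norm_div, div_le_iff₀ hpos]
  linarith only [hpq, hpos]

lemma ne_zero : p ≠ 0 ∧ q ≠ 0 := by
  obtain ⟨hp, hq, -⟩ := h.norm_comparable hS
  have hL := h.one_le
  exact ⟨norm_pos_iff.1 (by linarith only [hp, hL]), norm_pos_iff.1 (by linarith only [hq, hL])⟩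

-- `(2 p p′ q - p² q′) / q²` is the derivative of `p² / q`: the terms of degree two cancel.
lemma norm_mul_add_deriv_sq_div_le :
    ‖p * q + (2 * p * fieldP α z p q * q - p ^ 2 * fieldQ β z p q) / q ^ 2‖ ≤ 40 * L ^ 2 := by
  have hL := h.one_le
  obtain ⟨-, hq, -⟩ := h.norm_comparable hS
  have hq₀ := (h.ne_zero hS).2
  have hqpos : 0 < ‖q‖ := norm_pos_iff.2 hq₀
  have hpq := h.norm_div_le hS
  have hid : p * q + (2 * p * fieldP α z p q * q - p ^ 2 * fieldQ β z p q) / q ^ 2 =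
      -3 * (energy α β z p q / q) * (p / q) + α * (p / q) + 2 * β * (p / q) ^ 2 := by
    unfold fieldP fieldQ energy
    field_simp
    ring
  have henergy : ‖energy α β z p q / q‖ ≤ 5 * L ^ 2 := by
    have h₁ : L ^ 2 * L ≤ L ^ 2 * ‖q‖ := by gcongr; linarith only [hq, hL]
    have h₂ : 1 * ‖q‖ ≤ L ^ 2 * ‖q‖ := by gcongr; exact one_le_pow₀ hL
    rw [norm_div, div_le_iff₀ hqpos]
    linarith only [h.norm_energy_le, h₁, h₂]
  calc ‖p * q + (2 * p * fieldP α z p q * q - p ^ 2 * fieldQ β z p q) / q ^ 2‖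
      ≤ 3 * ‖energy α β z p q / q‖ * ‖p / q‖ + ‖α‖ * ‖p / q‖ + 2 * ‖β‖ * ‖p / q‖ ^ 2 := by
        rw [hid]
        refine norm_add₃_le.trans_eq ?_
        simp only [norm_mul, norm_neg, norm_pow, RCLike.norm_ofNat]
    _ ≤ 3 * (5 * L ^ 2) * 2 + L ^ 2 * 2 + 2 * L ^ 2 * 2 ^ 2 := by
        gcongr
        exacts [h.norm_α, h.norm_β]
    _ = 40 * L ^ 2 := by ring

lemma norm_deriv_sq_div_le :
    ‖(2 * p * fieldP α z p q * q - p ^ 2 * fieldQ β z p q) / q ^ 2‖ ≤ 16 * (‖p‖ + ‖q‖) ^ 2 := by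
  obtain ⟨hP, hQ⟩ := h.norm_field_le hS
  have hpq := h.norm_div_le hS
  have hq₀ := (h.ne_zero hS).2
  have hid : (2 * p * fieldP α z p q * q - p ^ 2 * fieldQ β z p q) / q ^ 2 =
      2 * (p / q) * fieldP α z p q - (p / q) ^ 2 * fieldQ β z p q := by
    field_simp
  calc ‖(2 * p * fieldP α z p q * q - p ^ 2 * fieldQ β z p q) / q ^ 2‖
      ≤ 2 * ‖p / q‖ * ‖fieldP α z p q‖ + ‖p / q‖ ^ 2 * ‖fieldQ β z p q‖ := by
        rw [hid]
        refine (norm_sub_le _ _).trans_eq ?_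
        simp only [norm_mul, norm_pow, RCLike.norm_ofNat]
    _ ≤ 2 * 2 * (2 * (‖p‖ + ‖q‖) ^ 2) + 2 ^ 2 * (2 * (‖p‖ + ‖q‖) ^ 2) := by gcongr
    _ = 16 * (‖p‖ + ‖q‖) ^ 2 := by ring

omit h hS in
lemma half_sq_le_norm_weight (p q : ℂ) : (‖p‖ + ‖q‖) ^ 2 / 2 ≤ ‖weight p q‖ := by
  rw [norm_weight]
  nlinarith only [sq_nonneg (‖p‖ - ‖q‖)]

lemma norm_mul_conj_sub_mul_conj_le :
    ‖p * conj p - q * conj q‖ ≤ 4 / 3 * L * (‖p‖ + ‖q‖) := by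
  have hfactor : p * conj p - q * conj q = (((‖p‖ - ‖q‖) * (‖p‖ + ‖q‖) : ℝ) : ℂ) := by
    rw [Complex.mul_conj', Complex.mul_conj']
    push_cast
    ring
  rw [hfactor, Complex.norm_real, Real.norm_eq_abs, abs_mul, abs_of_nonneg (a := ‖p‖ + ‖q‖)
    (by positivity)]
  gcongr
  exact h.abs_norm_sub_norm_le hS

lemma norm_one_sub_cutoff_le : ‖1 - cutoff p q‖ ≤ 20 * L ^ 2 / (‖p‖ + ‖q‖) ^ 2 := by
  have hL := h.one_le
  have hp := norm_nonneg p
  have hq := norm_nonneg q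
  have hdiff := h.norm_mul_conj_sub_mul_conj_le hS
  have hweight := half_sq_le_norm_weight p q
  have hwpos : 0 < ‖weight p q‖ := norm_pos_iff.2 (weight_ne_zero p q)
  set S := ‖p‖ + ‖q‖ with hSdef
  have hS₁ : 100 ≤ S := by linarith only [hS, hL]
  have hS₂ : 100 ^ 2 ≤ S ^ 2 := by gcongr
  have hLS : 1 ^ 2 * S ^ 2 ≤ L ^ 2 * S ^ 2 := by gcongr
  have hnum : ‖(p * conj p - q * conj q) ^ 2 + 2 * (p * conj p + q * conj q) + 1‖ ≤
      5 * L ^ 2 * S ^ 2 := by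
    calc ‖(p * conj p - q * conj q) ^ 2 + 2 * (p * conj p + q * conj q) + 1‖
        ≤ ‖p * conj p - q * conj q‖ ^ 2 + 2 * (‖p‖ ^ 2 + ‖q‖ ^ 2) + 1 := by
          refine norm_add₃_le.trans ?_
          rw [norm_pow, norm_mul 2, norm_one, RCLike.norm_ofNat, ← norm_mul_conj p,
            ← norm_mul_conj q]
          gcongr
          exact norm_add_le _ _
      _ ≤ (4 / 3 * L * S) ^ 2 + 2 * S ^ 2 + 1 := by
          gcongr
          rw [hSdef]
          nlinarith only [mul_nonneg hp hq]
      _ ≤ 5 * L ^ 2 * S ^ 2 := by nlinarith only [hLS, hS₂]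
  rw [one_sub_cutoff, norm_div, norm_pow, div_le_div_iff₀ (by positivity) (by positivity)]
  calc ‖(p * conj p - q * conj q) ^ 2 + 2 * (p * conj p + q * conj q) + 1‖ * S ^ 2
      ≤ 5 * L ^ 2 * S ^ 2 * S ^ 2 := by gcongr
    _ = 20 * L ^ 2 * (S ^ 2 / 2) ^ 2 := by ring
    _ ≤ 20 * L ^ 2 * ‖weight p q‖ ^ 2 := by gcongr

-- The Wronskian `p q′ - q p′` has a leading term `p³ + q³`, which the energy bound controls.
lemma norm_mul_fieldQ_sub_mul_fieldP_le :
    ‖p * fieldQ β z p q - q * fieldP α z p q‖ ≤ 2 * L * (‖p‖ + ‖q‖) ^ 2 := by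
  have hL := h.one_le
  have hcubes := h.norm_cube_add_cube_le hS
  have hlow := h.norm_lower_terms_le hS
  have hα := mul_nonneg (norm_nonneg α) (norm_nonneg q)
  have hβ := mul_nonneg (norm_nonneg β) (norm_nonneg p)
  have hid : p * fieldQ β z p q - q * fieldP α z p q =
      (p ^ 3 + q ^ 3) + 2 * z * p * q + β * p + α * q := by
    unfold fieldP fieldQ
    ring
  calc ‖p * fieldQ β z p q - q * fieldP α z p q‖
      ≤ ‖p ^ 3 + q ^ 3‖ + 2 * ‖z‖ * ‖p‖ * ‖q‖ + ‖β‖ * ‖p‖ + ‖α‖ * ‖q‖ := by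
        rw [hid]
        refine norm_add₄_le.trans_eq ?_
        simp only [norm_mul, RCLike.norm_ofNat]
    _ ≤ 2 * L * (‖p‖ + ‖q‖) ^ 2 := by
        have : 0 ≤ L * (‖p‖ + ‖q‖) ^ 2 := by positivity
        linarith only [hcubes, hlow, hα, hβ, this]

-- `|p|² (|q|²)′ - (|p|²)′ |q|²` is twice the real part of `conj (p q)` times the Wronskian.
lemma norm_normSq_wronskian_le {e : ℂ} (he : ‖e‖ = 1) :
    ‖p * conj p * (e * fieldQ β z p q * conj q + q * conj (e * fieldQ β z p q)) -
      (e * fieldP α z p q * conj p + p * conj (e * fieldP α z p q)) * (q * conj q)‖ ≤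
      L * (‖p‖ + ‖q‖) ^ 4 := by
  have hwronskian := h.norm_mul_fieldQ_sub_mul_fieldP_le hS
  have hpq : ‖p‖ * ‖q‖ ≤ (‖p‖ + ‖q‖) ^ 2 / 4 := by nlinarith only [sq_nonneg (‖p‖ - ‖q‖)]
  have hL := h.one_le
  set X := p * fieldQ β z p q - q * fieldP α z p q with hX
  calc _ = ‖e * X * conj (p * q) + p * q * conj (e * X)‖ := by
        simp only [hX, map_mul, map_sub]
        ring_nf
    _ ≤ 2 * (‖e * X‖ * ‖p * q‖) := norm_mul_conj_add_mul_conj_le _ _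
    _ = 2 * (‖X‖ * (‖p‖ * ‖q‖)) := by rw [norm_mul, norm_mul, he, one_mul]
    _ ≤ 2 * (2 * L * (‖p‖ + ‖q‖) ^ 2 * ((‖p‖ + ‖q‖) ^ 2 / 4)) := by gcongr
    _ = L * (‖p‖ + ‖q‖) ^ 4 := by ring

lemma norm_deriv_normSq_le {e : ℂ} (he : ‖e‖ = 1) :
    ‖e * fieldP α z p q * conj p + p * conj (e * fieldP α z p q)‖ ≤ 4 * (‖p‖ + ‖q‖) ^ 3 ∧
      ‖e * fieldQ β z p q * conj q + q * conj (e * fieldQ β z p q)‖ ≤ 4 * (‖p‖ + ‖q‖) ^ 3 := by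
  have hbound {u w : ℂ} (hu : ‖u‖ ≤ 2 * (‖p‖ + ‖q‖) ^ 2) (hw : ‖w‖ ≤ ‖p‖ + ‖q‖) :
      ‖e * u * conj w + w * conj (e * u)‖ ≤ 4 * (‖p‖ + ‖q‖) ^ 3 :=
    calc _ ≤ 2 * (‖e * u‖ * ‖w‖) := norm_mul_conj_add_mul_conj_le _ _
      _ = 2 * (‖u‖ * ‖w‖) := by rw [norm_mul, he, one_mul]
      _ ≤ 2 * (2 * (‖p‖ + ‖q‖) ^ 2 * (‖p‖ + ‖q‖)) := by gcongr
      _ = 4 * (‖p‖ + ‖q‖) ^ 3 := by ring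
  obtain ⟨hP, hQ⟩ := h.norm_field_le hS
  exact ⟨hbound hP (le_add_of_nonneg_right (norm_nonneg q)),
    hbound hQ (le_add_of_nonneg_left (norm_nonneg p))⟩

lemma norm_cutoffDeriv_le {e : ℂ} (he : ‖e‖ = 1) :
    ‖cutoffDeriv p q (e * fieldP α z p q) (e * fieldQ β z p q)‖ ≤
      320 * L ^ 2 / (‖p‖ + ‖q‖) := by
  have hL := h.one_le
  have hdiff := h.norm_mul_conj_sub_mul_conj_le hS
  have hwronskian := h.norm_normSq_wronskian_le hS he
  obtain ⟨hA, hB⟩ := h.norm_deriv_normSq_le hS he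
  have hweight := half_sq_le_norm_weight p q
  have hwpos : 0 < ‖weight p q‖ := norm_pos_iff.2 (weight_ne_zero p q)
  have hpS : ‖p‖ ≤ ‖p‖ + ‖q‖ := le_add_of_nonneg_right (norm_nonneg q)
  have hqS : ‖q‖ ≤ ‖p‖ + ‖q‖ := le_add_of_nonneg_left (norm_nonneg p)
  have hSpos : 0 < ‖p‖ + ‖q‖ := by linarith only [hS, hL]
  set S := ‖p‖ + ‖q‖
  rw [cutoffDeriv, norm_div, norm_pow, div_le_div_iff₀ (by positivity) hSpos]
  calc _ ≤ 4 * (4 / 3 * L * S * (L * S ^ 4) + 4 * S ^ 3 * S ^ 2 + S ^ 2 * (4 * S ^ 3)) * S := by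
        rw [norm_mul, RCLike.norm_ofNat]
        gcongr
        refine norm_add₃_le.trans ?_
        rw [norm_mul (_ - _), norm_mul _ (q * conj q), norm_mul (p * conj p) (_ + _),
          norm_mul_conj, norm_mul_conj]
        gcongr
    _ = 16 / 3 * (L ^ 2 * S ^ 6) + 32 * (1 ^ 2 * S ^ 6) := by ring
    _ ≤ 8 * (L ^ 2 * S ^ 6) + 32 * (L ^ 2 * S ^ 6) := by gcongr; norm_num
    _ = 320 * L ^ 2 * (S ^ 2 / 2) ^ 3 := by ring
    _ ≤ 320 * L ^ 2 * ‖weight p q‖ ^ 3 := by gcongr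

lemma norm_correctedEnergyDeriv_le_of_ge {e : ℂ} (he : ‖e‖ = 1) :
    ‖correctedEnergyDeriv α β e z p q‖ ≤ 10 ^ 7 * L ^ 2 := by
  have hL := h.one_le
  have : 0 < ‖p‖ + ‖q‖ := by linarith only [hS, hL]
  obtain ⟨-, -, hpq, -⟩ := h.norm_comparable hS
  have hq₀ := (h.ne_zero hS).2
  have hsq : ‖p ^ 2 / q‖ ≤ 2 * (‖p‖ + ‖q‖) := by
    rw [norm_div, norm_pow, div_le_iff₀ (norm_pos_iff.2 hq₀)]
    nlinarith only [hpq, norm_nonneg p, norm_nonneg q]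
  have hmain := h.norm_mul_add_deriv_sq_div_le hS
  have hG := h.norm_deriv_sq_div_le hS
  have hcutoff := h.norm_one_sub_cutoff_le hS
  have hcutoff' := h.norm_cutoffDeriv_le hS he
  set G := (2 * p * fieldP α z p q * q - p ^ 2 * fieldQ β z p q) / q ^ 2 with hGdef
  have hid : correctedEnergyDeriv α β e z p q = e * (p * q + G) - e * (G * (1 - cutoff p q)) +
      p ^ 2 / q * cutoffDeriv p q (e * fieldP α z p q) (e * fieldQ β z p q) := by
    rw [correctedEnergyDeriv, correctionDeriv_eq hq₀, hGdef]
    ring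
  calc ‖correctedEnergyDeriv α β e z p q‖
      ≤ ‖p * q + G‖ + ‖G‖ * ‖1 - cutoff p q‖ +
          ‖p ^ 2 / q‖ * ‖cutoffDeriv p q (e * fieldP α z p q) (e * fieldQ β z p q)‖ := by
        rw [hid]
        refine (norm_add_le _ _).trans ((add_le_add_left (norm_sub_le _ _) _).trans_eq ?_)
        simp only [norm_mul, he, one_mul]
    _ ≤ 40 * L ^ 2 + 16 * (‖p‖ + ‖q‖) ^ 2 * (20 * L ^ 2 / (‖p‖ + ‖q‖) ^ 2) +
          2 * (‖p‖ + ‖q‖) * (320 * L ^ 2 / (‖p‖ + ‖q‖)) := by gcongr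
    _ = 1000 * L ^ 2 := by field_simp; ring
    _ ≤ 10 ^ 7 * L ^ 2 := by gcongr; norm_num

omit hS in
lemma norm_correctedEnergyDeriv_le {e : ℂ} (he : ‖e‖ = 1) :
    ‖correctedEnergyDeriv α β e z p q‖ ≤ 10 ^ 7 * L ^ 2 :=
  (le_total (‖p‖ + ‖q‖) (100 * L)).elim (h.norm_correctedEnergyDeriv_le_of_le he)
    (h.norm_correctedEnergyDeriv_le_of_ge · he)

end EnergyBound

/-! ### Closed discrete sets -/

lemma countable_of_compl_mem_codiscrete {X : Type*} [TopologicalSpace X]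
    [HereditarilyLindelofSpace X] {Λ : Set X} (hΛ : Λᶜ ∈ codiscrete X) : Λ.Countable :=
  (HereditarilyLindelofSpace.isLindelof Λ).countable_of_isDiscrete (compl_mem_codiscrete_iff.1 hΛ).2

lemma finite_inter_of_compl_mem_codiscrete {X : Type*} [TopologicalSpace X] {Λ K : Set X}
    (hΛ : Λᶜ ∈ codiscrete X) (hK : IsCompact K) : (Λ ∩ K).Finite :=
  (hK.finite_sdiff_of_mem_codiscreteWithin (codiscreteWithin_mono (Set.subset_univ K) hΛ)).subset
    fun _ hz ↦ ⟨hz.2, fun h ↦ h hz.1⟩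

lemma nhdsNE_le_codiscrete {X : Type*} [TopologicalSpace X] (a : X) : 𝓝[≠] a ≤ codiscrete X :=
  le_iSup₂_of_le a (Set.mem_univ a) (by rw [Set.compl_eq_univ_sdiff])

lemma eventually_notMem_nhdsNE {X : Type*} [TopologicalSpace X] {Λ : Set X}
    (hΛ : Λᶜ ∈ codiscrete X) (a : X) : ∀ᶠ z in 𝓝[≠] a, z ∉ Λ :=
  nhdsNE_le_codiscrete a hΛ

lemma eventually_notMem_nhds {X : Type*} [TopologicalSpace X] {Λ : Set X}
    (hΛ : Λᶜ ∈ codiscrete X) {a : X} (ha : a ∉ Λ) : ∀ᶠ z in 𝓝 a, z ∉ Λ :=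
  (compl_mem_codiscrete_iff.1 hΛ).1.isOpen_compl.mem_nhds ha

lemma dense_setOf_ray_disjoint {Λ : Set ℂ} (hΛ : Λ.Countable) {b : ℂ} (hb : b ∉ Λ) :
    Dense {θ : ℝ | ∀ t ≥ 0, circleMap b t θ ∉ Λ} := by
  have hcount : (circleMap 0 1 ⁻¹' ((fun a ↦ (a - b) / (‖a - b‖ : ℂ)) '' Λ)).Countable :=
    (hΛ.image _).preimage_circleMap 0 one_ne_zero
  refine (hcount.dense_compl ℝ).mono fun θ hθ t ht hmem ↦ ?_
  rcases ht.eq_or_lt with rfl | hpos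
  · exact hb (by simpa only [circleMap, Complex.ofReal_zero, zero_mul, add_zero] using hmem)
  · refine hθ ⟨_, hmem, ?_⟩
    have : (t : ℂ) ≠ 0 := by exact_mod_cast hpos.ne'
    simp only [circleMap, add_sub_cancel_left, zero_add, norm_mul, Complex.norm_exp_ofReal_mul_I,
      Complex.norm_real, Real.norm_of_nonneg ht, mul_one, Complex.ofReal_one, one_mul]
    field_simp

/-! ### Cubic growth of the corrected energy -/

/-- `(P, Q)` solves the Hamiltonian system off the closed discrete set `Λ`, and it blows up at
every point of `Λ`. -/
structure IsSolutionOff (α β : ℂ) (P Q : ℂ → ℂ) (Λ : Set ℂ) : Prop where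
  hasDerivAt_fst : ∀ z ∉ Λ, HasDerivAt P (fieldP α z (P z) (Q z)) z
  hasDerivAt_snd : ∀ z ∉ Λ, HasDerivAt Q (fieldQ β z (P z) (Q z)) z
  compl_mem_codiscrete : Λᶜ ∈ codiscrete ℂ
  tendsto_norm_add_norm : ∀ a ∈ Λ, Tendsto (fun z ↦ ‖P z‖ + ‖Q z‖) (𝓝[≠] a) atTop

lemma EnergyBound.mono {α β z p q : ℂ} {L M : ℝ} (h : EnergyBound α β z p q L) (hLM : L ≤ M) :
    EnergyBound α β z p q M := by
  have hL : 0 ≤ L := zero_le_one.trans h.one_le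
  exact ⟨h.one_le.trans hLM, h.norm_z.trans hLM, h.norm_α.trans (by gcongr),
    h.norm_β.trans (by gcongr), h.norm_correctedEnergy.trans (by gcongr)⟩

lemma hasDerivAt_energy (α β : ℂ) {Z P Q : ℝ → ℂ} {z' u v : ℂ} {t : ℝ} (hZ : HasDerivAt Z z' t)
    (hP : HasDerivAt P u t) (hQ : HasDerivAt Q v t) :
    HasDerivAt (fun s ↦ energy α β (Z s) (P s) (Q s))
      (z' * (P t * Q t) + fieldQ β (Z t) (P t) (Q t) * u - fieldP α (Z t) (P t) (Q t) * v) t := by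
  refine ((((((hP.pow 3).add (hQ.pow 3)).div_const 3).add ((hZ.mul hP).mul hQ)).add
    (hQ.const_mul α)).add (hP.const_mul β)).congr_deriv ?_
  simp only [Pi.mul_apply, fieldP, fieldQ]
  push_cast
  ring

lemma hasDerivAt_correction {P Q : ℝ → ℂ} {u v : ℂ} {t : ℝ} (hP : HasDerivAt P u t)
    (hQ : HasDerivAt Q v t) :
    HasDerivAt (fun s ↦ correction (P s) (Q s)) (correctionDeriv (P t) (Q t) u v) t := by
  have hw := weight_ne_zero (P t) (Q t)
  have hweight : HasDerivAt (fun s ↦ weight (P s) (Q s)) _ t :=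
    ((hP.mul hP.star).add (hQ.mul hQ.star)).add_const 1
  refine (((((hP.pow 3).const_mul 4).mul hP.star).mul hQ.star).div (hweight.pow 2)
    (pow_ne_zero 2 hw)).congr_deriv ?_
  simp only [Pi.mul_apply, Pi.pow_apply, correctionDeriv, starRingEnd_apply]
  field_simp
  push_cast
  ring

lemma hasDerivAt_correctedEnergy {α β e : ℂ} {Z P Q : ℝ → ℂ} {t : ℝ} (hZ : HasDerivAt Z e t)
    (hP : HasDerivAt P (e * fieldP α (Z t) (P t) (Q t)) t)
    (hQ : HasDerivAt Q (e * fieldQ β (Z t) (P t) (Q t)) t) :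
    HasDerivAt (fun s ↦ correctedEnergy α β (Z s) (P s) (Q s))
      (correctedEnergyDeriv α β e (Z t) (P t) (Q t)) t := by
  refine ((hasDerivAt_energy α β hZ hP hQ).add (hasDerivAt_correction hP hQ)).congr_deriv ?_
  rw [correctedEnergyDeriv]
  ring

namespace IsSolutionOff

variable {α β : ℂ} {P Q : ℂ → ℂ} {Λ : Set ℂ} (h : IsSolutionOff α β P Q Λ)
include h

lemma continuousAt_correctedEnergy {z : ℂ} (hz : z ∉ Λ) :
    ContinuousAt (fun z ↦ correctedEnergy α β z (P z) (Q z)) z := by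
  have hP := (h.hasDerivAt_fst z hz).continuousAt
  have hQ := (h.hasDerivAt_snd z hz).continuousAt
  have hw := pow_ne_zero 2 (weight_ne_zero (P z) (Q z))
  unfold correctedEnergy energy correction weight at *
  fun_prop (disch := exact hw)

lemma hasDerivAt_correctedEnergy_ray {b : ℂ} {t θ : ℝ} (ht : circleMap b t θ ∉ Λ) :
    HasDerivAt (fun s ↦ correctedEnergy α β (circleMap b s θ) (P (circleMap b s θ))
      (Q (circleMap b s θ))) (correctedEnergyDeriv α β (Complex.exp (θ * Complex.I))
      (circleMap b t θ) (P (circleMap b t θ)) (Q (circleMap b t θ))) t := by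
  have hray : HasDerivAt (fun s : ℝ ↦ circleMap b s θ) (Complex.exp (θ * Complex.I)) t := by
    simpa only [circleMap, one_mul, Complex.ofRealCLM_apply, Complex.ofReal_one] using
      ((Complex.ofRealCLM.hasDerivAt (x := t)).mul_const _).const_add b
  exact hasDerivAt_correctedEnergy hray
    (((h.hasDerivAt_fst _ ht).comp t hray).congr_deriv (mul_comm _ _))
    (((h.hasDerivAt_snd _ ht).comp t hray).congr_deriv (mul_comm _ _))

lemma norm_correctedEnergy_ray_le {A : ℝ} (hA : 10 ^ 7 ≤ A) (hα : ‖α‖ ≤ A) (hβ : ‖β‖ ≤ A) {b : ℂ}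
    (hb : ‖b‖ ≤ A) (hVb : ‖correctedEnergy α β b (P b) (Q b)‖ ≤ A) {θ : ℝ}
    (hθ : ∀ t ≥ 0, circleMap b t θ ∉ Λ) {s : ℝ} (hs : 0 ≤ s) :
    ‖correctedEnergy α β (circleMap b s θ) (P (circleMap b s θ)) (Q (circleMap b s θ))‖ ≤
      (A * (1 + s)) ^ 3 := by
  have hderiv (t : ℝ) (ht : 0 ≤ t) := h.hasDerivAt_correctedEnergy_ray (hθ t ht)
  have hbound (t : ℝ) : HasDerivAt (fun t ↦ (A * (1 + t)) ^ 3) (3 * A * (A * (1 + t)) ^ 2) t := by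
    refine ((((hasDerivAt_id t).const_add 1).const_mul A).pow 3).congr_deriv ?_
    simp only [id_eq]
    push_cast
    ring
  have hA₁ : 1 ≤ A := by linarith only [hA]
  refine image_norm_le_of_norm_deriv_right_lt_deriv_boundary' (a := 0) (b := s)
    (fun t ht ↦ (hderiv t ht.1).continuousAt.continuousWithinAt)
    (fun t ht ↦ (hderiv t ht.1).hasDerivWithinAt) ?_
    (fun t _ ↦ (hbound t).continuousAt.continuousWithinAt)
    (fun t _ ↦ (hbound t).hasDerivWithinAt) (fun t ht hVt ↦ ?_) ⟨hs, le_rfl⟩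
  · simpa only [circleMap, Complex.ofReal_zero, zero_mul, add_zero, mul_one] using
      hVb.trans (le_self_pow₀ hA₁ three_ne_zero)
  · have hL : A ≤ A * (1 + t) := le_mul_of_one_le_right (by linarith) (by linarith only [ht.1])
    have hL₁ : 1 ≤ A * (1 + t) := hA₁.trans hL
    have hz : ‖circleMap b t θ‖ ≤ A * (1 + t) := by
      calc ‖circleMap b t θ‖ ≤ ‖b‖ + ‖circleMap 0 t θ‖ := by
            rw [← circleMap_sub_center b]
            simpa only [add_sub_cancel] using norm_add_le b (circleMap b t θ - b)
        _ ≤ A + A * t := by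
            rw [norm_circleMap_zero, abs_of_nonneg ht.1]
            gcongr
            exact le_mul_of_one_le_left ht.1 hA₁
        _ = A * (1 + t) := by ring
    have henergy : EnergyBound α β (circleMap b t θ) (P (circleMap b t θ)) (Q (circleMap b t θ))
        (A * (1 + t)) :=
      ⟨hL₁, hz, (hα.trans hL).trans (le_self_pow₀ hL₁ two_ne_zero),
        (hβ.trans hL).trans (le_self_pow₀ hL₁ two_ne_zero), hVt.le⟩
    calc _ ≤ 10 ^ 7 * (A * (1 + t)) ^ 2 :=
          henergy.norm_correctedEnergyDeriv_le (Complex.norm_exp_ofReal_mul_I θ)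
      _ < 3 * A * (A * (1 + t)) ^ 2 := by gcongr; linarith only [hA]

-- Rays that avoid `Λ` reach a dense subset of the circle through `z`, and continuity at `z` does
-- the rest.
lemma exists_energyBound :
    ∃ A ≥ 1, ∀ z ∉ Λ, EnergyBound α β z (P z) (Q z) (A * (1 + ‖z‖)) := by
  have hcount := countable_of_compl_mem_codiscrete h.compl_mem_codiscrete
  obtain ⟨b, hb⟩ : ∃ b, b ∉ Λ := (hcount.dense_compl ℝ).nonempty
  set V := fun z ↦ correctedEnergy α β z (P z) (Q z)
  set A : ℝ := 10 ^ 7 + ‖b‖ + ‖α‖ + ‖β‖ + ‖V b‖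
  have hb₀ := norm_nonneg b
  have hα₀ := norm_nonneg α
  have hβ₀ := norm_nonneg β
  have hV₀ := norm_nonneg (V b)
  have hA₁ : 1 ≤ A := by linarith
  have hgrowth (z : ℂ) (hz : z ∉ Λ) : ‖V z‖ ≤ (A * (1 + ‖z - b‖)) ^ 3 := by
    have hpolar : circleMap b ‖z - b‖ (z - b).arg = z := by
      rw [circleMap, Complex.norm_mul_exp_arg_mul_I, add_sub_cancel]
    have hcont : ContinuousAt (fun θ ↦ ‖V (circleMap b ‖z - b‖ θ)‖) (z - b).arg :=
      (ContinuousAt.comp (g := V) (by rw [hpolar]; exact h.continuousAt_correctedEnergy hz)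
        (continuous_circleMap b ‖z - b‖).continuousAt).norm
    rw [ContinuousAt, hpolar] at hcont
    refine le_of_tendsto_of_frequently hcont
      ((mem_closure_iff_frequently.1 (dense_setOf_ray_disjoint hcount hb _)).mono fun θ hθ ↦ ?_)
    exact h.norm_correctedEnergy_ray_le (by linarith) (by linarith) (by linarith) (by linarith)
      (by linarith) hθ (norm_nonneg _)
  refine ⟨A * (1 + ‖b‖), by nlinarith, fun z hz ↦ ?_⟩
  have hz₀ := norm_nonneg z
  have hscale : A * (1 + ‖z - b‖) ≤ A * (1 + ‖b‖) * (1 + ‖z‖) := by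
    rw [mul_assoc]
    gcongr
    nlinarith only [norm_sub_le z b, hz₀, hb₀]
  have hAL : A ≤ A * (1 + ‖b‖) * (1 + ‖z‖) :=
    (le_mul_of_one_le_right (by linarith) (by linarith [norm_nonneg (z - b)])).trans hscale
  have hL₁ : 1 ≤ A * (1 + ‖b‖) * (1 + ‖z‖) := hA₁.trans hAL
  have hL₂ := hAL.trans (le_self_pow₀ hL₁ two_ne_zero)
  exact ⟨hL₁, by nlinarith only [hz₀, hb₀, hA₁, mul_nonneg hb₀ hz₀], by linarith, by linarith,
    (hgrowth z hz).trans (by gcongr)⟩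

end IsSolutionOff

/-! ### Local behaviour near the poles -/

-- Schwarz's lemma for the derivative keeps it close to its value at the centre.
lemma mul_norm_sub_le_norm_image_sub {f : ℂ → ℂ} {w z : ℂ} {R M : ℝ}
    (hf : DifferentiableOn ℂ f (Metric.ball w R)) (hM : ∀ y ∈ Metric.ball w R, ‖deriv f y‖ ≤ M)
    (hz : z ∈ Metric.ball w R) :
    (‖deriv f w‖ - 2 * M / R * ‖z - w‖) * ‖z - w‖ ≤ ‖f z - f w‖ := by
  have hR : 0 < R := Metric.nonempty_ball.1 ⟨z, hz⟩
  have hM₀ : 0 ≤ M := (norm_nonneg _).trans (hM z hz)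
  have hsub : Metric.closedBall w ‖z - w‖ ⊆ Metric.ball w R :=
    Metric.closedBall_subset_ball (by rwa [← dist_eq_norm])
  have hderiv : ∀ y ∈ Metric.closedBall w ‖z - w‖,
      ‖deriv f y - deriv f w‖ ≤ 2 * M / R * ‖z - w‖ := fun y hy ↦ by
    rw [← dist_eq_norm]
    calc dist (deriv f y) (deriv f w) ≤ 2 * M / R * dist y w :=
          Complex.dist_le_div_mul_dist_of_mapsTo_ball (hf.deriv Metric.isOpen_ball)
            (fun x hx ↦ by
              rw [mem_closedBall_iff_norm, two_mul]
              exact (norm_sub_le _ _).trans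
                (add_le_add (hM x hx) (hM w (Metric.mem_ball_self hR)))) (hsub hy)
      _ ≤ 2 * M / R * ‖z - w‖ := by gcongr; exact hy
  have hlin := (convex_closedBall w ‖z - w‖).norm_image_sub_le_of_norm_hasDerivWithin_le
    (f := fun y ↦ f y - y * deriv f w)
    (fun y hy ↦ ((hf.differentiableAt (Metric.isOpen_ball.mem_nhds (hsub hy))).hasDerivAt.sub
      (hasDerivAt_mul_const _)).hasDerivWithinAt)
    hderiv (Metric.mem_closedBall_self (norm_nonneg _)) (mem_closedBall_iff_norm.2 le_rfl)
  have htri := norm_sub_norm_le ((z - w) * deriv f w) (f z - f w)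
  rw [norm_sub_rev (_ * _), norm_mul] at htri
  have hrw : f z - z * deriv f w - (f w - w * deriv f w) = f z - f w - (z - w) * deriv f w := by
    ring
  rw [hrw] at hlin
  linarith

namespace EnergyBound

variable {α β z p q : ℂ} {L : ℝ} (h : EnergyBound α β z p q L) (hS : 100 * L ≤ ‖p‖ + ‖q‖)
include h hS

lemma norm_mul_add_le : ‖z * p + α‖ ≤ 0.03 * ‖p‖ ^ 2 := by
  have hL := h.one_le
  have : 49 * L ≤ ‖p‖ := (h.norm_comparable hS).1
  have hlin : 49 * L * ‖p‖ ≤ ‖p‖ * ‖p‖ := by gcongr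
  have hsq : (49 * L) ^ 2 ≤ ‖p‖ ^ 2 := by gcongr
  calc ‖z * p + α‖ ≤ ‖z‖ * ‖p‖ + ‖α‖ := (norm_add_le _ _).trans_eq (by rw [norm_mul])
    _ ≤ L * ‖p‖ + L ^ 2 := by gcongr; exacts [h.norm_z, h.norm_α]
    _ ≤ 0.03 * ‖p‖ ^ 2 := by nlinarith only [hlin, hsq]

lemma norm_fieldP_div_sq_mem_Icc : ‖fieldP α z p q / p ^ 2‖ ∈ Set.Icc (1 / 2) 2 := by
  have hL := h.one_le
  obtain ⟨hp, -, hpq, hqp⟩ := h.norm_comparable hS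
  have hlow := h.norm_mul_add_le hS
  have hp₀ : 0 < ‖p‖ ^ 2 := pow_pos (by linarith only [hp, hL]) 2
  have hq_le : ‖q‖ ^ 2 ≤ (1.03 * ‖p‖) ^ 2 := by gcongr
  have hq_ge : ‖p‖ ^ 2 ≤ (1.03 * ‖q‖) ^ 2 := by gcongr
  have hfield : ‖fieldP α z p q‖ = ‖q ^ 2 + (z * p + α)‖ := by
    rw [← norm_neg, fieldP]
    ring_nf
  have hge := norm_sub_le_norm_add (q ^ 2) (z * p + α)
  have hle := norm_add_le (q ^ 2) (z * p + α)
  rw [norm_pow] at hge hle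
  rw [norm_div, norm_pow, Set.mem_Icc, le_div_iff₀ hp₀, div_le_iff₀ hp₀, hfield]
  constructor
  · nlinarith only [hge, hlow, hq_ge, hp₀]
  · nlinarith only [hle, hlow, hq_le, hp₀]

lemma norm_one_add_div_cube_le : ‖1 + (q / p) ^ 3‖ ≤ 5 * L / ‖p‖ := by
  have hL := h.one_le
  obtain ⟨hp, -, -, hqp⟩ := h.norm_comparable hS
  have hp₀ : 0 < ‖p‖ := by linarith only [hp, hL]
  have hp_ne := (h.ne_zero hS).1
  have hrw : 1 + (q / p) ^ 3 = (p ^ 3 + q ^ 3) / p ^ 3 := by field_simp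
  rw [hrw, norm_div, norm_pow, div_le_div_iff₀ (by positivity) hp₀]
  calc ‖p ^ 3 + q ^ 3‖ * ‖p‖ ≤ L * (‖p‖ + 1.03 * ‖p‖) ^ 2 * ‖p‖ := by
        gcongr
        exact (h.norm_cube_add_cube_le hS).trans (by gcongr)
    _ = L * (2.03 ^ 2 * ‖p‖ ^ 3) := by ring
    _ ≤ L * (5 * ‖p‖ ^ 3) := by gcongr; norm_num
    _ = 5 * L * ‖p‖ ^ 3 := by ring

end EnergyBound

/-- A scale `L` at which the energy bound holds at every point off `Λ` of the closed unit disc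
around `w`. -/
structure IsScaleAt (α β : ℂ) (P Q : ℂ → ℂ) (Λ : Set ℂ) (w : ℂ) (L : ℝ) : Prop where
  one_le : 1 ≤ L
  energyBound : ∀ z ∉ Λ, ‖z - w‖ ≤ 1 → EnergyBound α β z (P z) (Q z) L

/-- The function `1 / P`, with the value `0` on `Λ` whatever the junk values of `P` there. -/
def recip (P : ℂ → ℂ) (Λ : Set ℂ) : ℂ → ℂ := Λᶜ.indicator fun z ↦ (P z)⁻¹

/-- The points of `Λ` together with the points where `‖P‖` exceeds `M`. -/
def largeSet (P : ℂ → ℂ) (Λ : Set ℂ) (M : ℝ) : Set ℂ := {z | z ∈ Λ ∨ M < ‖P z‖}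

lemma recip_of_mem {P : ℂ → ℂ} {Λ : Set ℂ} {a : ℂ} (ha : a ∈ Λ) : recip P Λ a = 0 :=
  Set.indicator_of_notMem (Set.notMem_compl_iff.2 ha) _

lemma recip_of_notMem {P : ℂ → ℂ} {Λ : Set ℂ} {z : ℂ} (hz : z ∉ Λ) : recip P Λ z = (P z)⁻¹ :=
  Set.indicator_of_mem hz _

lemma eight_div_le {L x : ℝ} (hL : 0 < L) (hx : 200000 * L ≤ x) : 8 / x ≤ 1 / (16000 * L) := by
  rw [div_le_div_iff₀ (by linarith) (by positivity)]
  linarith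

lemma norm_recip_le {P : ℂ → ℂ} {Λ : Set ℂ} {w : ℂ} {M : ℝ} (hM : 0 < M)
    (hw : w ∈ Λ ∨ M ≤ ‖P w‖) : ‖recip P Λ w‖ ≤ 1 / M := by
  by_cases hwΛ : w ∈ Λ
  · rw [recip_of_mem hwΛ, norm_zero]
    positivity
  · rw [recip_of_notMem hwΛ, norm_inv, one_div]
    gcongr
    exact hw.resolve_left hwΛ

namespace IsSolutionOff

variable {α β : ℂ} {P Q : ℂ → ℂ} {Λ : Set ℂ} (h : IsSolutionOff α β P Q Λ)
include h

lemma exists_isScaleAt : ∃ A ≥ 1, ∀ w, IsScaleAt α β P Q Λ w (A * (1 + ‖w‖)) := by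
  obtain ⟨A, hA, hbound⟩ := h.exists_energyBound
  refine ⟨A * 2, by linarith, fun w ↦ ⟨by nlinarith [norm_nonneg w], fun z hz hzw ↦ ?_⟩⟩
  refine (hbound z hz).mono ?_
  rw [mul_assoc]
  gcongr
  linarith [norm_sub_norm_le z w, norm_nonneg w]

lemma eventually_energyBound (a : ℂ) :
    ∃ L, ∀ᶠ z in 𝓝[≠] a, EnergyBound α β z (P z) (Q z) L := by
  obtain ⟨A, -, hA⟩ := h.exists_isScaleAt
  refine ⟨A * (1 + ‖a‖), ?_⟩
  filter_upwards [eventually_notMem_nhdsNE h.compl_mem_codiscrete a,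
    nhdsWithin_le_nhds (Metric.closedBall_mem_nhds a one_pos)] with z hz hza
  exact (hA a).energyBound z hz (mem_closedBall_iff_norm.1 hza)

variable {a : ℂ} (ha : a ∈ Λ)

section Pole

include ha

lemma tendsto_norm_fst : Tendsto (fun z ↦ ‖P z‖) (𝓝[≠] a) atTop := by
  obtain ⟨L, hL⟩ := h.eventually_energyBound a
  have hsum := h.tendsto_norm_add_norm a ha
  refine tendsto_atTop_mono' _ ?_ (hsum.atTop_div_const (r := 3) (by norm_num))
  filter_upwards [hL, hsum.eventually_ge_atTop (100 * L)] with z hz hS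
  obtain ⟨-, -, -, hqp⟩ := hz.norm_comparable hS
  linarith [norm_nonneg (P z)]

end Pole

lemma isOpen_largeSet (M : ℝ) : IsOpen (largeSet P Λ M) := by
  refine isOpen_iff_eventually.2 fun z hz ↦ ?_
  by_cases hzΛ : z ∈ Λ
  · have hlarge := (h.tendsto_norm_fst hzΛ).eventually_gt_atTop M
    filter_upwards [eventually_nhdsWithin_iff.1 hlarge] with y hy
    rcases eq_or_ne y z with rfl | hyz
    exacts [Or.inl hzΛ, Or.inr (hy hyz)]
  · filter_upwards [(h.hasDerivAt_fst z hzΛ).continuousAt.norm.eventually_const_lt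
      (hz.resolve_left hzΛ)] with y hy
    exact Or.inr hy

lemma hasDerivAt_recip {z : ℂ} (hz : z ∉ Λ) (hP : P z ≠ 0) :
    HasDerivAt (recip P Λ) (-fieldP α z (P z) (Q z) / P z ^ 2) z := by
  refine ((h.hasDerivAt_fst z hz).inv hP).congr_of_eventuallyEq ?_
  filter_upwards [eventually_notMem_nhds h.compl_mem_codiscrete hz] with y hy
  exact recip_of_notMem hy

section Pole

include ha

lemma analyticAt_recip : AnalyticAt ℂ (recip P Λ) a := by
  have hlim := h.tendsto_norm_fst ha
  have hoff := eventually_notMem_nhdsNE h.compl_mem_codiscrete a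
  apply Complex.analyticAt_of_differentiable_on_punctured_nhds_of_continuousAt
  · filter_upwards [hoff, hlim.eventually_gt_atTop 0] with z hz hPz
    exact (h.hasDerivAt_recip hz (norm_pos_iff.1 hPz)).differentiableAt
  · rw [continuousAt_iff_punctured_nhds, recip_of_mem ha, tendsto_zero_iff_norm_tendsto_zero]
    refine hlim.inv_tendsto_atTop.congr' ?_
    filter_upwards [hoff] with z hz
    rw [Pi.inv_apply, recip_of_notMem hz, norm_inv]

lemma tendsto_div_sq :
    Tendsto (fun z ↦ (Q z / P z) ^ 2) (𝓝[≠] a) (𝓝 (deriv (recip P Λ) a)) := by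
  have hX := h.analyticAt_recip ha
  have hX₀ : Tendsto (recip P Λ) (𝓝[≠] a) (𝓝 0) := by
    simpa only [recip_of_mem ha] using hX.continuousAt.tendsto.mono_left nhdsWithin_le_nhds
  have hX₁ : Tendsto (deriv (recip P Λ)) (𝓝[≠] a) (𝓝 (deriv (recip P Λ) a)) :=
    hX.deriv.continuousAt.tendsto.mono_left nhdsWithin_le_nhds
  have hid : Tendsto (fun z ↦ z) (𝓝[≠] a) (𝓝 a) := nhdsWithin_le_nhds
  have hlim := (hX₁.sub (hid.mul hX₀)).sub ((hX₀.pow 2).const_mul α)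
  rw [mul_zero, sub_zero, zero_pow two_ne_zero, mul_zero, sub_zero] at hlim
  refine hlim.congr' ?_
  filter_upwards [eventually_notMem_nhdsNE h.compl_mem_codiscrete a,
    (h.tendsto_norm_fst ha).eventually_gt_atTop 0] with z hz hPz
  have hP := norm_pos_iff.1 hPz
  rw [(h.hasDerivAt_recip hz hP).deriv, recip_of_notMem hz, fieldP]
  field_simp
  ring

lemma tendsto_div_cube : Tendsto (fun z ↦ (Q z / P z) ^ 3) (𝓝[≠] a) (𝓝 (-1)) := by
  obtain ⟨L, hL⟩ := h.eventually_energyBound a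
  have hbound : Tendsto (fun z ↦ 5 * L / ‖P z‖) (𝓝[≠] a) (𝓝 0) :=
    (h.tendsto_norm_fst ha).const_div_atTop _
  have hzero : Tendsto (fun z ↦ 1 + (Q z / P z) ^ 3) (𝓝[≠] a) (𝓝 0) := by
    refine squeeze_zero_norm' ?_ hbound
    filter_upwards [hL, (h.tendsto_norm_add_norm a ha).eventually_ge_atTop (100 * L)] with z hz hS
    exact hz.norm_one_add_div_cube_le hS
  simpa only [zero_sub, add_sub_cancel_left] using hzero.sub_const 1

lemma deriv_recip_cube : deriv (recip P Λ) a ^ 3 = 1 := by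
  have hsq := (h.tendsto_div_sq ha).pow 3
  have hcube := (h.tendsto_div_cube ha).pow 2
  rw [neg_one_sq] at hcube
  exact tendsto_nhds_unique (hsq.congr fun z ↦ by ring) hcube

lemma exists_hasResidue :
    ∃ ρ : ℂ, ρ ^ 3 = 1 ∧ HasResidue P a ρ ∧ HasResidue Q a (-ρ ^ 2) := by
  set ξ := deriv (recip P Λ) a
  have hξ : ξ ^ 3 = 1 := h.deriv_recip_cube ha
  have hξ₀ : ξ ≠ 0 := by
    rintro h₀
    simp [h₀] at hξ
  have hoff := eventually_notMem_nhdsNE h.compl_mem_codiscrete a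
  have hP : HasResidue P a ξ⁻¹ := by
    have hslope :=
      hasDerivAt_iff_tendsto_slope.1 (h.analyticAt_recip ha).differentiableAt.hasDerivAt
    refine (hslope.inv₀ hξ₀).congr' ?_
    filter_upwards [hoff] with z hz
    simp [slope_def_field, recip_of_mem ha, recip_of_notMem hz]
  refine ⟨ξ⁻¹, by rw [inv_pow, hξ, inv_one], hP, ?_⟩
  have hratio := (h.tendsto_div_cube ha).div (h.tendsto_div_sq ha) hξ₀
  have hlim := Tendsto.mul hP hratio
  rw [show ξ⁻¹ * (-1 / ξ) = -ξ⁻¹ ^ 2 by field_simp] at hlim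
  refine hlim.congr' ?_
  filter_upwards [(h.tendsto_norm_fst ha).eventually_gt_atTop 0] with z hPz
  have hPz := norm_pos_iff.1 hPz
  rcases eq_or_ne (Q z) 0 with hQ | hQ
  · simp [hQ]
  · rw [Pi.div_apply]
    field_simp

end Pole

section Scale

variable {w : ℂ} {L : ℝ} (hL : IsScaleAt α β P Q Λ w L)
include hL

lemma norm_deriv_recip {z : ℂ} (hzw : ‖z - w‖ ≤ 1) (hz : z ∈ largeSet P Λ (100 * L)) :
    DifferentiableAt ℂ (recip P Λ) z ∧ ‖deriv (recip P Λ) z‖ ∈ Set.Icc (1 / 2) 2 := by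
  by_cases hzΛ : z ∈ Λ
  · rw [Complex.norm_eq_one_of_pow_eq_one (h.deriv_recip_cube hzΛ) three_ne_zero]
    exact ⟨(h.analyticAt_recip hzΛ).differentiableAt, by norm_num⟩
  · have hbound := hL.energyBound z hzΛ hzw
    have hS : 100 * L ≤ ‖P z‖ + ‖Q z‖ :=
      (hz.resolve_left hzΛ).le.trans (le_add_of_nonneg_right (norm_nonneg _))
    have hderiv := h.hasDerivAt_recip hzΛ (hbound.ne_zero hS).1
    rw [hderiv.deriv, neg_div, norm_neg]
    exact ⟨hderiv.differentiableAt, hbound.norm_fieldP_div_sq_mem_Icc hS⟩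

variable (hw : w ∈ Λ ∨ 400 * L ≤ ‖P w‖)
include hw

lemma one_le_mul_norm_fst_of_ball_subset {r : ℝ} (hr : r ≤ 1 / (400 * L))
    (hsub : Metric.ball w r ⊆ largeSet P Λ (100 * L)) {z : ℂ} (hz : z ∈ Metric.ball w r)
    (hzΛ : z ∉ Λ) : 1 ≤ 3 / (400 * L) * ‖P z‖ := by
  have hL₁ := hL.one_le
  have hr₁ : r ≤ 1 := hr.trans ((div_le_one (by positivity)).2 (by linarith))
  have hderiv (y : ℂ) (hy : y ∈ Metric.ball w r) :=
    h.norm_deriv_recip hL (mem_ball_iff_norm.1 hy |>.le.trans hr₁) (hsub hy)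
  have hw_mem : w ∈ Metric.ball w r := Metric.mem_ball_self (Metric.nonempty_ball.1 ⟨z, hz⟩)
  have hlip := (convex_ball w r).norm_image_sub_le_of_norm_deriv_le
    (fun y hy ↦ (hderiv y hy).1) (fun y hy ↦ (hderiv y hy).2.2) hw_mem hz
  have hX : ‖recip P Λ z‖ ≤ 3 / (400 * L) := by
    have hcentre := norm_recip_le (M := 400 * L) (by linarith) hw
    have hzr := mem_ball_iff_norm.1 hz
    have hthree : 3 / (400 * L) = 3 * (1 / (400 * L)) := by ring
    linarith [norm_sub_norm_le (recip P Λ z) (recip P Λ w)]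
  have hP : 0 < ‖P z‖ := lt_trans (by positivity) ((hsub hz).resolve_left hzΛ)
  rwa [recip_of_notMem hzΛ, norm_inv, inv_le_iff_one_le_mul₀ hP] at hX

-- Otherwise consider the point outside `largeSet` nearest to `w`: the Lipschitz bound for `1 / P`,
-- valid up to that point, makes `‖P‖` too large there.
lemma ball_subset_largeSet : Metric.ball w (1 / (400 * L)) ⊆ largeSet P Λ (100 * L) := by
  have hL₁ := hL.one_le
  by_contra hcon
  obtain ⟨z₀, hz₀, hz₀K⟩ := Set.not_subset.1 hcon
  set K := (largeSet P Λ (100 * L))ᶜ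
  obtain ⟨z, hzK, hz⟩ :=
    (h.isOpen_largeSet (100 * L)).isClosed_compl.exists_infDist_eq_dist ⟨z₀, hz₀K⟩ w
  have hd : dist w z ≤ 1 / (400 * L) := by
    rw [← hz]
    exact (Metric.infDist_le_dist_of_mem hz₀K).trans (Metric.mem_ball'.1 hz₀).le
  have hsub : Metric.ball w (dist w z) ⊆ largeSet P Λ (100 * L) := by
    rw [← hz, ← Set.disjoint_compl_right_iff_subset]
    exact Metric.disjoint_ball_infDist
  obtain ⟨hzΛ, hPz⟩ : z ∉ Λ ∧ ‖P z‖ ≤ 100 * L := by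
    simpa only [K, largeSet, Set.mem_compl_iff, Set.mem_ofPred_eq, not_or, not_lt] using hzK
  have hzw : w ≠ z := by
    rintro rfl
    rcases hw with hw | hw
    exacts [hzΛ hw, by linarith]
  have hclosure : z ∈ closure (Metric.ball w (dist w z)) := by
    rw [closure_ball w (dist_pos.2 hzw).ne', Metric.mem_closedBall']
  have hge : 1 ≤ 3 / (400 * L) * ‖P z‖ := by
    refine ge_of_tendsto_of_frequently
      ((h.hasDerivAt_fst z hzΛ).continuousAt.norm.const_mul (3 / (400 * L))).tendsto ?_
    refine ((mem_closure_iff_frequently.1 hclosure).and_eventually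
      (eventually_notMem_nhds h.compl_mem_codiscrete hzΛ)).mono fun y hy ↦ ?_
    exact h.one_le_mul_norm_fst_of_ball_subset hL hw hd hsub hy.1 hy.2
  have hle : 3 / (400 * L) * ‖P z‖ ≤ 3 / (400 * L) * (100 * L) := by gcongr
  have hval : 3 / (400 * L) * (100 * L) = 3 / 4 := by field_simp; norm_num
  linarith

lemma mul_norm_sub_le_norm_recip_sub {z : ℂ} (hz : ‖z - w‖ ≤ 1 / (16000 * L)) :
    3 / 8 * ‖z - w‖ ≤ ‖recip P Λ z - recip P Λ w‖ := by
  have hL₁ := hL.one_le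
  have hδ : 1 / (400 * L) ≤ 1 := (div_le_one (by positivity)).2 (by linarith)
  have hδ₀ : 0 < 1 / (400 * L) := by positivity
  have hderiv (y : ℂ) (hy : y ∈ Metric.ball w (1 / (400 * L))) :=
    h.norm_deriv_recip hL (mem_ball_iff_norm.1 hy |>.le.trans hδ)
      (h.ball_subset_largeSet hL hw hy)
  refine le_trans ?_ (mul_norm_sub_le_norm_image_sub (R := 1 / (400 * L)) (M := 2)
    (fun y hy ↦ (hderiv y hy).1.differentiableWithinAt) (fun y hy ↦ (hderiv y hy).2.2)
    (mem_ball_iff_norm.2 (hz.trans_lt ?_)))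
  · gcongr
    have hcentre := (hderiv w (Metric.mem_ball_self hδ₀)).2.1
    have hsmall : 2 * 2 / (1 / (400 * L)) * ‖z - w‖ ≤ 1 / 10 := by
      calc 2 * 2 / (1 / (400 * L)) * ‖z - w‖ ≤ 2 * 2 / (1 / (400 * L)) * (1 / (16000 * L)) := by
            gcongr
        _ = 1 / 10 := by field_simp; norm_num
    linarith
  · gcongr
    norm_num

end Scale

section Near

variable {w : ℂ} {L : ℝ} (hL : IsScaleAt α β P Q Λ w L) (hwΛ : w ∉ Λ) (hw : 200000 * L ≤ ‖P w‖)
include hL hwΛ hw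

-- If there were no such point, then `P` would be holomorphic near the disc of radius `8 / ‖P w‖`,
-- while the separation of the values of `1 / P` gives `‖P‖ ≤ ‖P w‖ / 2` on its boundary.
lemma exists_mem_norm_sub_le : ∃ a ∈ Λ, ‖a - w‖ ≤ 8 / ‖P w‖ := by
  have hL₁ := hL.one_le
  have hP₀ : 0 < ‖P w‖ := by linarith
  have hs : 8 / ‖P w‖ ≠ 0 := by positivity
  by_contra! hcon
  have hoff (z : ℂ) (hz : z ∈ Metric.closedBall w (8 / ‖P w‖)) : z ∉ Λ := fun hzΛ ↦
    (hcon z hzΛ).not_ge (mem_closedBall_iff_norm.1 hz)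
  have hdiff : DiffContOnCl ℂ P (Metric.ball w (8 / ‖P w‖)) := by
    apply DifferentiableOn.diffContOnCl
    rw [closure_ball w hs]
    exact fun z hz ↦ (h.hasDerivAt_fst z (hoff z hz)).differentiableAt.differentiableWithinAt
  have hboundary (z : ℂ) (hz : z ∈ frontier (Metric.ball w (8 / ‖P w‖))) :
      ‖P z‖ ≤ ‖P w‖ / 2 := by
    rw [frontier_ball w hs] at hz
    have hsep := h.mul_norm_sub_le_norm_recip_sub hL (z := z) (Or.inr (by linarith))
      ((mem_sphere_iff_norm.1 hz).trans_le (eight_div_le (by linarith) hw))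
    rw [recip_of_notMem (hoff z (Metric.sphere_subset_closedBall hz)), recip_of_notMem hwΛ,
      mem_sphere_iff_norm.1 hz] at hsep
    have htri := norm_sub_le (P z)⁻¹ (P w)⁻¹
    rw [norm_inv, norm_inv] at htri
    have hinv : 2 / ‖P w‖ ≤ ‖P z‖⁻¹ := by
      have hthree : 3 / 8 * (8 / ‖P w‖) = 2 / ‖P w‖ + ‖P w‖⁻¹ := by field_simp; norm_num
      linarith
    have hPz : 0 < ‖P z‖ := inv_pos.1 (lt_of_lt_of_le (by positivity) hinv)
    rwa [le_inv_comm₀ (by positivity) hPz, inv_div] at hinv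
  have hmax := Complex.norm_le_of_forall_mem_frontier_norm_le Metric.isBounded_ball hdiff hboundary
    (subset_closure (Metric.mem_ball_self (by positivity)))
  linarith

lemma exists_mem_norm_fst_le :
    ∃ a ∈ Λ, ‖w - a‖ ≤ 8 / ‖P w‖ ∧ ‖P w‖ ≤ 3 / ‖w - a‖ := by
  have hL₁ := hL.one_le
  obtain ⟨a, ha, hdist⟩ := h.exists_mem_norm_sub_le hL hwΛ hw
  have hsep := h.mul_norm_sub_le_norm_recip_sub hL (z := a) (Or.inr (by linarith))
    (hdist.trans (eight_div_le (by linarith) hw))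
  rw [recip_of_mem ha, recip_of_notMem hwΛ, zero_sub, norm_neg, norm_inv] at hsep
  rw [norm_sub_rev] at hdist hsep
  have hwa : 0 < ‖w - a‖ := norm_pos_iff.2 (sub_ne_zero.2 (ne_of_mem_of_not_mem ha hwΛ).symm)
  refine ⟨a, ha, hdist, (le_div_iff₀ hwa).2 ?_⟩
  rw [le_inv_comm₀ (by positivity) (by linarith), mul_inv] at hsep
  calc ‖P w‖ * ‖w - a‖ ≤ (3 / 8)⁻¹ * ‖w - a‖⁻¹ * ‖w - a‖ := by gcongr
    _ = 8 / 3 := by field_simp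
    _ ≤ 3 := by norm_num

end Near

end IsSolutionOff

/-- The bound on the value `u` at `w` of a function with poles in `Λ`: it is linear in `‖w‖`,
except at points `w` at distance at most `1 / (1 + ‖w‖)` from a point of `Λ`, where it is only a
multiple of the inverse distance to that point. -/
def PolarBound (Λ : Set ℂ) (C : ℝ) (w u : ℂ) : Prop :=
  ‖u‖ ≤ C * (1 + ‖w‖) ∨ ∃ a ∈ Λ, ‖w - a‖ * (1 + ‖w‖) ≤ 1 ∧ ‖u‖ ≤ C / ‖w - a‖

/-- `f` grows at most linearly away from `Λ` and like a simple pole near `Λ`. The values of `f` on a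
closed discrete set do not matter. -/
def HasPolarGrowth (f : ℂ → ℂ) (Λ : Set ℂ) : Prop :=
  ∃ C ≥ 1, ∀ᶠ w in codiscrete ℂ, PolarBound Λ C w (f w)

/-- Any two points `a ≠ b` of `Λ` are at distance at least a fixed multiple of `1 / (1 + ‖a‖)`. -/
def IsWellSeparated (Λ : Set ℂ) : Prop :=
  ∃ c > 0, ∀ a ∈ Λ, ∀ b ∈ Λ, a ≠ b → c ≤ ‖b - a‖ * (1 + ‖a‖)

namespace IsSolutionOff

variable {α β : ℂ} {P Q : ℂ → ℂ} {Λ : Set ℂ} (h : IsSolutionOff α β P Q Λ)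
include h

lemma exists_polarBound : ∃ C ≥ 1, ∀ w ∉ Λ, PolarBound Λ C w (P w) := by
  obtain ⟨A, hA, hscale⟩ := h.exists_isScaleAt
  refine ⟨200000 * A, by linarith, fun w hw ↦ ?_⟩
  have hw₁ : 1 ≤ 1 + ‖w‖ := le_add_of_nonneg_right (norm_nonneg w)
  refine (le_total ‖P w‖ (200000 * A * (1 + ‖w‖))).imp_right fun hP ↦ ?_
  rw [mul_assoc] at hP
  obtain ⟨a, ha, hdist, hpole⟩ := h.exists_mem_norm_fst_le (hscale w) hw hP
  refine ⟨a, ha, ?_, hpole.trans (by gcongr; linarith)⟩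
  calc ‖w - a‖ * (1 + ‖w‖) ≤ 8 / (200000 * (1 * (1 + ‖w‖))) * (1 + ‖w‖) := by
        gcongr
        refine hdist.trans ?_
        gcongr
        refine le_trans ?_ hP
        gcongr
    _ ≤ 1 := by
        rw [one_mul, div_mul_eq_mul_div, div_le_one (by positivity)]
        linarith

lemma exists_norm_snd_le :
    ∃ C ≥ 1, ∀ w ∉ Λ, ‖Q w‖ ≤ C * (1 + ‖w‖) ∨ ‖Q w‖ ≤ 2 * ‖P w‖ := by
  obtain ⟨A, hA, hbound⟩ := h.exists_energyBound
  refine ⟨100 * A, by linarith, fun w hw ↦ ?_⟩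
  rcases le_total (100 * (A * (1 + ‖w‖))) (‖P w‖ + ‖Q w‖) with hS | hS
  · right
    linarith [((hbound w hw).norm_comparable hS).2.2.2, norm_nonneg (P w)]
  · left
    linarith [norm_nonneg (P w)]

lemma hasPolarGrowth_fst : HasPolarGrowth P Λ := by
  obtain ⟨C, hC, hbound⟩ := h.exists_polarBound
  exact ⟨C, hC, mem_of_superset h.compl_mem_codiscrete hbound⟩

lemma hasPolarGrowth_snd : HasPolarGrowth Q Λ := by
  obtain ⟨C, hC, hP⟩ := h.exists_polarBound
  obtain ⟨B, hB, hQ⟩ := h.exists_norm_snd_le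
  refine ⟨2 * C + B, by linarith, mem_of_superset h.compl_mem_codiscrete fun w hw ↦ ?_⟩
  have : 0 ≤ 1 + ‖w‖ := by positivity
  have hB₁ : B * (1 + ‖w‖) ≤ (2 * C + B) * (1 + ‖w‖) := by gcongr; linarith
  have hC₁ : 2 * (C * (1 + ‖w‖)) ≤ (2 * C + B) * (1 + ‖w‖) := by
    rw [← mul_assoc]
    gcongr
    linarith
  rcases hQ w hw with hQw | hQw
  · exact Or.inl (hQw.trans hB₁)
  · refine (hP w hw).imp (fun hPw ↦ by linarith) fun ⟨a, ha, hwa, hPw⟩ ↦ ⟨a, ha, hwa, ?_⟩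
    calc ‖Q w‖ ≤ 2 * (C / ‖w - a‖) := by linarith
      _ = 2 * C / ‖w - a‖ := by ring
      _ ≤ (2 * C + B) / ‖w - a‖ := by gcongr; linarith

lemma isWellSeparated : IsWellSeparated Λ := by
  obtain ⟨A, hA, hscale⟩ := h.exists_isScaleAt
  refine ⟨1 / (16000 * A), by positivity, fun a ha b hb hab ↦ ?_⟩
  by_contra! hcon
  have hinj := h.mul_norm_sub_le_norm_recip_sub (hscale a) (z := b) (Or.inl ha) (by
    rw [← mul_assoc, ← div_div, le_div_iff₀ (by positivity)]
    exact hcon.le)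
  rw [recip_of_mem ha, recip_of_mem hb, sub_zero, norm_zero] at hinj
  linarith [norm_pos_iff.2 (sub_ne_zero.2 hab.symm)]

end IsSolutionOff

/-! ### Packing in annuli -/

section Packing

open MeasureTheory Metric

lemma volume_closedBall_sdiff_ball {r R : ℝ} (hr : 0 ≤ r) (hrR : r ≤ R) :
    volume (closedBall (0 : ℂ) R \ ball 0 r) = ENNReal.ofReal (Real.pi * (R ^ 2 - r ^ 2)) := by
  have hsub : ball (0 : ℂ) r ⊆ closedBall 0 R :=
    (ball_subset_ball hrR).trans ball_subset_closedBall
  rw [measure_sdiff hsub measurableSet_ball.nullMeasurableSet measure_ball_lt_top.ne,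
    Complex.volume_ball, Complex.volume_closedBall, ← ENNReal.ofReal_coe_nnreal,
    NNReal.coe_real_pi, ← ENNReal.ofReal_pow hr, ← ENNReal.ofReal_pow (hr.trans hrR),
    ← ENNReal.ofReal_mul (by positivity), ← ENNReal.ofReal_mul (by positivity),
    ← ENNReal.ofReal_sub _ (by positivity)]
  congr 1
  ring

lemma card_mul_sq_le_of_annulus {F : Finset ℂ} {s ρ₁ ρ₂ : ℝ} (hs : 0 ≤ s) (hsρ : s ≤ ρ₁)
    (hρ : ρ₁ ≤ ρ₂) (hsep : ∀ a ∈ F, ∀ b ∈ F, a ≠ b → 2 * s ≤ ‖b - a‖)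
    (hF : ∀ a ∈ F, ρ₁ ≤ ‖a‖ ∧ ‖a‖ ≤ ρ₂) : F.card * s ^ 2 ≤ (ρ₂ + s) ^ 2 - (ρ₁ - s) ^ 2 := by
  have hdisj : (F : Set ℂ).PairwiseDisjoint fun a ↦ ball a s := fun a ha b hb hab ↦
    ball_disjoint_ball (by rw [dist_comm, dist_eq_norm]; linarith only [hsep a ha b hb hab])
  have hsub : ⋃ a ∈ F, ball a s ⊆ closedBall 0 (ρ₂ + s) \ ball 0 (ρ₁ - s) := by
    refine Set.iUnion₂_subset fun a ha z hz ↦ ?_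
    rw [mem_ball_iff_norm] at hz
    rw [Set.mem_sdiff, mem_closedBall_zero_iff, mem_ball_zero_iff, not_lt]
    have := abs_le.1 (abs_norm_sub_norm_le z a)
    constructor <;> linarith [hF a ha]
  have hvol := measure_mono (μ := volume) hsub
  rw [measure_biUnion_finset hdisj fun _ _ ↦ measurableSet_ball,
    volume_closedBall_sdiff_ball (by linarith) (by linarith)] at hvol
  simp only [Complex.volume_ball, Finset.sum_const, nsmul_eq_mul] at hvol
  rw [← ENNReal.ofReal_coe_nnreal, NNReal.coe_real_pi, ← ENNReal.ofReal_pow hs,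
    ← ENNReal.ofReal_mul (by positivity), ← ENNReal.ofReal_natCast,
    ← ENNReal.ofReal_mul (by positivity), ENNReal.ofReal_le_ofReal_iff
      (mul_nonneg Real.pi_pos.le (by nlinarith))] at hvol
  exact le_of_mul_le_mul_left (by linarith) Real.pi_pos

end Packing

lemma IsWellSeparated.exists_card_le {Λ : Set ℂ} (hsep : IsWellSeparated Λ) :
    ∃ K : ℝ, ∀ r ≥ 2, ∀ F : Finset ℂ, (∀ a ∈ F, a ∈ Λ ∧ |‖a‖ - r| ≤ 2 / r) →
      F.card ≤ K * r ^ 2 := by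
  obtain ⟨c₀, hc₀, hsep⟩ := hsep
  set c := min c₀ 1
  have hc : 0 < c := lt_min hc₀ one_pos
  refine ⟨12 * 64 / c ^ 2, fun r hr F hF ↦ ?_⟩
  have hr0 : 0 < r := by linarith
  have hir : 1 / r ≤ 1 / 2 := by gcongr
  have hir0 : 0 < 1 / r := by positivity
  have h2r : 2 / r = 2 * (1 / r) := by ring
  have hs : c / (8 * r) ≤ 1 / r := by
    rw [div_le_div_iff₀ (by positivity) hr0]
    nlinarith [min_le_right c₀ 1]
  have hball (a) (ha : a ∈ F) : r - 2 / r ≤ ‖a‖ ∧ ‖a‖ ≤ r + 2 / r := by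
    have := abs_le.1 (hF a ha).2
    constructor <;> linarith
  have hpair (a) (ha : a ∈ F) (b) (hb : b ∈ F) (hab : a ≠ b) : 2 * (c / (8 * r)) ≤ ‖b - a‖ := by
    have : 2 * (c / (8 * r)) = c / (4 * r) := by ring
    rw [this, div_le_iff₀ (by positivity)]
    refine (min_le_left c₀ 1).trans ((hsep a (hF a ha).1 b (hF b hb).1 hab).trans ?_)
    gcongr
    linarith [(hball a ha).2]
  have hcard := card_mul_sq_le_of_annulus (by positivity) (by linarith)
    (by linarith only [h2r, hir0]) hpair hball
  have hwidth : (r + 2 / r + c / (8 * r)) ^ 2 - (r - 2 / r - c / (8 * r)) ^ 2 ≤ 12 := by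
    calc _ = 4 * r * (2 * (1 / r) + c / (8 * r)) := by ring
      _ ≤ 4 * r * (2 * (1 / r) + 1 / r) := by gcongr
      _ = 12 := by field_simp; norm_num
  rw [div_mul_eq_mul_div, le_div_iff₀ (by positivity)]
  calc F.card * c ^ 2 = 64 * r ^ 2 * (F.card * (c / (8 * r)) ^ 2) := by field_simp; norm_num
    _ ≤ 64 * r ^ 2 * 12 := by gcongr; exact hcard.trans hwidth
    _ = 12 * 64 * r ^ 2 := by ring

lemma exists_finset_annulus {Λ : Set ℂ} (hΛ : Λᶜ ∈ codiscrete ℂ) (hsep : IsWellSeparated Λ) :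
    ∃ K : ℝ, ∀ r ≥ 2, ∃ A : Finset ℂ,
      (∀ a, a ∈ A ↔ a ∈ Λ ∧ |‖a‖ - r| ≤ 2 / r) ∧ A.card ≤ K * r ^ 2 := by
  obtain ⟨K, hcard⟩ := hsep.exists_card_le
  refine ⟨K, fun r hr ↦ ?_⟩
  have hfin : (Λ ∩ {a | |‖a‖ - r| ≤ 2 / r}).Finite := by
    refine (finite_inter_of_compl_mem_codiscrete hΛ
      (isCompact_closedBall (0 : ℂ) (r + 2 / r))).subset ?_
    rintro a ⟨haΛ, ha : |‖a‖ - r| ≤ 2 / r⟩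
    rw [Set.mem_inter_iff, mem_closedBall_zero_iff]
    exact ⟨haΛ, by linarith [(abs_le.1 ha).2]⟩
  have hmem (a : ℂ) : a ∈ hfin.toFinset ↔ a ∈ Λ ∧ |‖a‖ - r| ≤ 2 / r := hfin.mem_toFinset
  exact ⟨hfin.toFinset, hmem, hcard r hr _ fun a ↦ (hmem a).1⟩

lemma norm_sub_le_and_abs_norm_sub_le {r : ℝ} (hr : 0 < r) {w a : ℂ} (hrw : r ≤ ‖w‖)
    (hwr : ‖w‖ ≤ r + 1 / r) (hwa : ‖w - a‖ * (1 + ‖w‖) ≤ 1) :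
    ‖w - a‖ ≤ 1 / r ∧ |‖a‖ - r| ≤ 2 / r := by
  have hdist : ‖w - a‖ ≤ 1 / r := by
    rw [le_div_iff₀ hr]
    refine le_trans ?_ hwa
    gcongr
    linarith
  have h2r : 2 / r = 1 / r + 1 / r := by ring
  have := abs_le.1 (abs_norm_sub_norm_le w a)
  exact ⟨hdist, abs_le.2 ⟨by linarith, by linarith⟩⟩

/-! ### The residue theorem on discs -/

lemma hasResidue_iff_of_eventuallyEq {f g : ℂ → ℂ} {a ρ : ℂ} (h : f =ᶠ[𝓝[≠] a] g) :
    HasResidue f a ρ ↔ HasResidue g a ρ :=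
  tendsto_congr' (h.mono fun z hz ↦ congrArg ((z - a) * ·) hz)

lemma hasResidue_zero_of_continuousAt {f : ℂ → ℂ} {a : ℂ} (hf : ContinuousAt f a) :
    HasResidue f a 0 := by
  have : ContinuousAt (fun z ↦ (z - a) * f z) a := by fun_prop
  unfold HasResidue
  simpa only [sub_self, zero_mul] using this.tendsto.mono_left (nhdsWithin_le_nhds (s := {a}ᶜ))

lemma hasResidue_const_div_sub (a c : ℂ) : HasResidue (fun z ↦ c / (z - a)) a c :=
  tendsto_const_nhds.congr' <| eventually_mem_nhdsWithin.mono fun _ hz ↦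
    (mul_div_cancel₀ c (sub_ne_zero.2 hz)).symm

lemma _root_.HasResidue.sub {f g : ℂ → ℂ} {a ρ σ : ℂ} (hf : HasResidue f a ρ)
    (hg : HasResidue g a σ) : HasResidue (fun z ↦ f z - g z) a (ρ - σ) :=
  (Tendsto.sub hf hg).congr fun _ ↦ (mul_sub _ _ _).symm

lemma _root_.HasResidue.sum {ι : Type*} {F : Finset ι} {f : ι → ℂ → ℂ} {a : ℂ} {ρ : ι → ℂ}
    (hf : ∀ i ∈ F, HasResidue (f i) a (ρ i)) :
    HasResidue (fun z ↦ ∑ i ∈ F, f i z) a (∑ i ∈ F, ρ i) :=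
  (tendsto_finsetSum F hf).congr fun _ ↦ (Finset.mul_sum _ _ _).symm

lemma hasResidue_sum_div_sub {F : Finset ℂ} (res : ℂ → ℂ) {b : ℂ} (hb : b ∈ F) :
    HasResidue (fun z ↦ ∑ a ∈ F, res a / (z - a)) b (res b) := by
  classical
  have hsum : HasResidue (fun z ↦ ∑ a ∈ F, res a / (z - a)) b
      (∑ a ∈ F, if a = b then res a else 0) := by
    refine HasResidue.sum fun a _ ↦ ?_
    split_ifs with hab
    · exact hab ▸ hasResidue_const_div_sub a (res a)
    · have : b - a ≠ 0 := sub_ne_zero.2 (Ne.symm hab)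
      exact hasResidue_zero_of_continuousAt (by fun_prop (disch := assumption))
  rwa [Finset.sum_ite_eq', if_pos hb] at hsum

lemma differentiableAt_update_limUnder_of_hasResidue_zero {f : ℂ → ℂ} {a : ℂ}
    (hd : ∀ᶠ z in 𝓝[≠] a, DifferentiableAt ℂ f z) (hf : HasResidue f a 0) :
    DifferentiableAt ℂ (Function.update f a (limUnder (𝓝[≠] a) f)) a := by
  have hs : insert a {z | DifferentiableAt ℂ f z} ∈ 𝓝 a := insert_mem_nhds_iff.2 hd
  refine (Complex.differentiableOn_update_limUnder_of_isLittleO hs ?_ ?_).differentiableAt hs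
  · rintro z ⟨rfl | hz, hza⟩
    · exact absurd rfl hza
    · exact hz.differentiableWithinAt
  · have hlim : Tendsto (fun z ↦ (f z - f a) / (z - a)⁻¹) (𝓝[≠] a) (𝓝 0) := by
      have := hf.sub (hasResidue_zero_of_continuousAt (continuousAt_const (y := f a)))
      rw [sub_zero] at this
      exact this.congr fun z ↦ by rw [div_inv_eq_mul]; ring
    refine (isLittleO_iff_tendsto' ?_).2 hlim
    filter_upwards [self_mem_nhdsWithin] with z hz h0
    exact absurd h0 (inv_ne_zero (sub_ne_zero.2 hz))

lemma circleIntegral_eq_zero_of_hasResidue_zero {f : ℂ → ℂ} {c : ℂ} {t : ℝ} (ht : 0 ≤ t)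
    {F : Finset ℂ} (hF : ∀ a ∈ F, a ∈ Metric.ball c t)
    (hd : ∀ z ∈ Metric.closedBall c t, z ∉ F → DifferentiableAt ℂ f z)
    (hres : ∀ a ∈ F, HasResidue f a 0) : ∮ z in C(c, t), f z = 0 := by
  classical
  set G : ℂ → ℂ := fun z ↦ if z ∈ F then limUnder (𝓝[≠] z) f else f z with hG
  have hGf {z} (hz : z ∉ F) : G z = f z := if_neg hz
  have hFc {z} (hz : z ∉ F) : ∀ᶠ w in 𝓝 z, w ∉ F :=
    F.finite_toSet.isClosed.isOpen_compl.mem_nhds hz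
  have hFc' (a : ℂ) : ∀ᶠ w in 𝓝[≠] a, w ∉ F := by
    filter_upwards [nhdsWithin_le_nhds ((F.erase a).finite_toSet.isClosed.isOpen_compl.mem_nhds
      (by simp)), self_mem_nhdsWithin] with w hw hwa hwF
    exact hw (Finset.mem_erase.2 ⟨hwa, hwF⟩)
  have hGd (z) (hz : z ∈ Metric.closedBall c t) : DifferentiableAt ℂ G z := by
    by_cases hzF : z ∈ F
    · have hdz : ∀ᶠ w in 𝓝[≠] z, DifferentiableAt ℂ f w := by
        filter_upwards [hFc' z, nhdsWithin_le_nhds (Metric.isOpen_ball.mem_nhds (hF z hzF))]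
          with w hwF hwt using hd w (Metric.ball_subset_closedBall hwt) hwF
      refine (differentiableAt_update_limUnder_of_hasResidue_zero hdz
        (hres z hzF)).congr_of_eventuallyEq ?_
      filter_upwards [eventually_nhdsWithin_iff.1 (hFc' z)] with w hw
      rcases eq_or_ne w z with rfl | hwz
      · rw [Function.update_self, hG]
        exact if_pos hzF
      · rw [Function.update_of_ne hwz, hGf (hw hwz)]
    · exact (hd z hz hzF).congr_of_eventuallyEq ((hFc hzF).mono fun w ↦ hGf)
  have hsphere (z) (hz : z ∈ Metric.sphere c t) : f z = G z :=
    (hGf fun hzF ↦ (Metric.mem_ball.1 (hF z hzF)).ne hz).symm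
  rw [circleIntegral.integral_congr ht hsphere]
  exact Complex.circleIntegral_eq_zero_of_differentiable_on_off_countable ht Set.countable_empty
    (fun z hz ↦ (hGd z hz).continuousAt.continuousWithinAt)
    fun z hz ↦ hGd z (Metric.ball_subset_closedBall hz.1)

lemma circleIntegral_eq_sum_residues {f res : ℂ → ℂ} {c : ℂ} {t : ℝ} {F : Finset ℂ} (ht : 0 ≤ t)
    (hF : ∀ a ∈ F, a ∈ Metric.ball c t)
    (hd : ∀ z ∈ Metric.closedBall c t, z ∉ F → DifferentiableAt ℂ f z)
    (hres : ∀ a ∈ F, HasResidue f a (res a)) :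
    ∮ z in C(c, t), f z = 2 * Real.pi * Complex.I * ∑ a ∈ F, res a := by
  have hne {z a : ℂ} (hz : z ∉ F) (ha : a ∈ F) : z - a ≠ 0 :=
    sub_ne_zero.2 fun h ↦ hz (h ▸ ha)
  have hdiv {z a : ℂ} (ρ : ℂ) (hza : z - a ≠ 0) : DifferentiableAt ℂ (fun w ↦ ρ / (w - a)) z := by
    fun_prop (disch := exact hza)
  have hsphere (z) (hz : z ∈ Metric.sphere c t) : z ∉ F := fun hzF ↦
    (Metric.mem_ball.1 (hF z hzF)).ne hz
  have hterm (a) (ha : a ∈ F) : CircleIntegrable (fun z ↦ res a / (z - a)) c t :=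
    ContinuousOn.circleIntegrable ht fun z hz ↦
      (hdiv _ (hne (hsphere z hz) ha)).continuousAt.continuousWithinAt
  have hf : CircleIntegrable f c t := ContinuousOn.circleIntegrable ht fun z hz ↦
    (hd z (Metric.sphere_subset_closedBall hz) (hsphere z hz)).continuousAt.continuousWithinAt
  have hrem : ∮ z in C(c, t), (f z - ∑ a ∈ F, res a / (z - a)) = 0 := by
    refine circleIntegral_eq_zero_of_hasResidue_zero ht hF (fun z hz hzF ↦
      (hd z hz hzF).sub (DifferentiableAt.fun_sum fun a ha ↦ hdiv _ (hne hzF ha))) fun b hb ↦ ?_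
    simpa only [sub_self] using (hres b hb).sub (hasResidue_sum_div_sub res hb)
  rw [circleIntegral.integral_sub hf (CircleIntegrable.fun_sum F hterm), sub_eq_zero] at hrem
  rw [hrem, circleIntegral.integral_fun_sum hterm, Finset.mul_sum]
  refine Finset.sum_congr rfl fun a ha ↦ ?_
  simp only [div_eq_mul_inv, circleIntegral.integral_const_mul,
    circleIntegral.integral_sub_inv_of_mem_ball (hF a ha)]
  ring

/-! ### Averaging over circles -/

section Averaging

open MeasureTheory
open scoped ENNReal

/-- The arc length integral of `Ψ` over the circle `‖w‖ = t`, for `0 ≤ t`. -/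
def circleLIntegral (Ψ : ℂ → ℝ≥0∞) (t : ℝ) : ℝ≥0∞ :=
  ∫⁻ θ in Set.Ioo (-Real.pi) Real.pi, ENNReal.ofReal t * Ψ (circleMap 0 t θ)

lemma measurable_ofReal_mul_circleMap {Ψ : ℂ → ℝ≥0∞} (hΨ : Measurable Ψ) :
    Measurable fun x : ℝ × ℝ ↦ ENNReal.ofReal x.1 * Ψ (circleMap 0 x.1 x.2) := by
  unfold circleMap
  fun_prop

lemma measurable_circleLIntegral {Ψ : ℂ → ℝ≥0∞} (hΨ : Measurable Ψ) :
    Measurable (circleLIntegral Ψ) :=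
  (measurable_ofReal_mul_circleMap hΨ).lintegral_prod_right'

lemma lintegral_eq_lintegral_circleLIntegral {Ψ : ℂ → ℝ≥0∞} (hΨ : Measurable Ψ) :
    ∫⁻ w, Ψ w = ∫⁻ t in Set.Ioi (0 : ℝ), circleLIntegral Ψ t := by
  have hpolar (x : ℝ × ℝ) : Complex.polarCoord.symm x = circleMap 0 x.1 x.2 := by
    rw [Complex.polarCoord_symm_apply, circleMap, Complex.exp_mul_I, zero_add,
      Complex.ofReal_cos, Complex.ofReal_sin]
  rw [← Complex.lintegral_comp_polarCoord_symm, polarCoord_target, Measure.volume_eq_prod,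
    ← Measure.prod_restrict]
  simp only [hpolar, smul_eq_mul]
  exact lintegral_prod _ (measurable_ofReal_mul_circleMap hΨ).aemeasurable

lemma enorm_circleIntegral_le {f : ℂ → ℂ} {t : ℝ} (ht : 0 ≤ t) {Ψ : ℂ → ℝ≥0∞}
    (hΨ : ∀ w, ‖w‖ = t → ‖f w‖ₑ ≤ Ψ w) : ‖∮ z in C(0, t), f z‖ₑ ≤ circleLIntegral Ψ t := by
  have hnorm (θ : ℝ) : ‖circleMap 0 t θ‖ = t := by rw [norm_circleMap_zero, abs_of_nonneg ht]
  have hper : Function.Periodic (fun θ ↦ deriv (circleMap 0 t) θ • f (circleMap 0 t θ))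
      (2 * Real.pi) := fun θ ↦ by simp only [deriv_circleMap, periodic_circleMap (0 : ℂ) t θ]
  have hshift := hper.intervalIntegral_add_eq 0 (-Real.pi)
  rw [zero_add, show -Real.pi + 2 * Real.pi = Real.pi by ring] at hshift
  rw [circleIntegral, hshift, intervalIntegral.integral_of_le (by linarith [Real.pi_pos]),
    setIntegral_congr_set Ioo_ae_eq_Ioc.symm]
  refine (enorm_integral_le_lintegral_enorm _).trans (lintegral_mono fun θ ↦ ?_)
  simp only [deriv_circleMap, enorm_smul, enorm_mul]
  rw [← ofReal_norm (circleMap 0 t θ), hnorm, ← ofReal_norm Complex.I, Complex.norm_I,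
    ENNReal.ofReal_one, mul_one]
  gcongr
  exact hΨ _ (hnorm θ)

lemma exists_circleLIntegral_le {Ψ : ℂ → ℝ≥0∞} (hΨ : Measurable Ψ) {r R : ℝ} (hr : 0 ≤ r)
    (hrR : r < R) {T : Set ℝ} (hT : T.Countable) :
    ∃ t ∈ Set.Ioo r R, t ∉ T ∧ circleLIntegral Ψ t ≤ (∫⁻ w, Ψ w) / ENNReal.ofReal (R - r) := by
  have hne : volume.restrict (Set.Ioo r R) ≠ 0 := by
    rw [Ne, Measure.restrict_eq_zero, Real.volume_Ioo, ENNReal.ofReal_eq_zero, not_le]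
    exact sub_pos.2 hrR
  have hnull : volume.restrict (Set.Ioo r R) (T ∪ (Set.Ioo r R)ᶜ) = 0 :=
    measure_union_null (hT.measure_zero _) (ae_restrict_mem measurableSet_Ioo)
  obtain ⟨t, htN, ht⟩ := exists_notMem_null_le_laverage hne
    (measurable_circleLIntegral hΨ).aemeasurable hnull
  rw [Set.mem_union, Set.mem_compl_iff, not_or, not_not] at htN
  refine ⟨t, htN.2, htN.1, ht.trans ?_⟩
  rw [setLAverage_eq, Real.volume_Ioo, lintegral_eq_lintegral_circleLIntegral hΨ]
  gcongr
  exact fun s hs ↦ hr.trans_lt hs.1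

/-- The kernel `1 / ‖u‖` truncated to the disc of radius `s`, modelling a simple pole at `0`. -/
def poleKernel (s : ℝ) : ℂ → ℝ≥0∞ :=
  (Metric.closedBall 0 s).indicator fun u ↦ ENNReal.ofReal ‖u‖⁻¹

lemma measurable_poleKernel (s : ℝ) : Measurable (poleKernel s) :=
  Measurable.indicator (by fun_prop) measurableSet_closedBall

lemma circleLIntegral_poleKernel (s : ℝ) {t : ℝ} (ht : 0 < t) :
    circleLIntegral (poleKernel s) t =
      (Set.Iic s).indicator (fun _ ↦ ENNReal.ofReal (2 * Real.pi)) t := by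
  have hval (θ : ℝ) : ENNReal.ofReal t * poleKernel s (circleMap 0 t θ) =
      (Set.Iic s).indicator 1 t := by
    simp only [poleKernel, Set.indicator, mem_closedBall_zero_iff, norm_circleMap_zero,
      abs_of_pos ht, Set.mem_Iic]
    split_ifs
    · rw [← ENNReal.ofReal_mul ht.le, mul_inv_cancel₀ ht.ne', ENNReal.ofReal_one, Pi.one_apply]
    · rw [mul_zero]
  simp only [circleLIntegral, hval, lintegral_const, Measure.restrict_apply_univ,
    Real.volume_Ioo, Set.indicator, Pi.one_apply, ite_mul, one_mul, zero_mul]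
  congr 2
  ring

lemma lintegral_poleKernel (s : ℝ) : ∫⁻ w, poleKernel s w = ENNReal.ofReal (2 * Real.pi * s) := by
  rw [lintegral_eq_lintegral_circleLIntegral (measurable_poleKernel s),
    setLIntegral_congr_fun measurableSet_Ioi fun _ ↦ circleLIntegral_poleKernel s,
    lintegral_indicator measurableSet_Iic, lintegral_const, Measure.restrict_apply_univ,
    Measure.restrict_apply measurableSet_Iic, Set.Iic_inter_Ioi, Real.volume_Ioc,
    ← ENNReal.ofReal_mul (by positivity), sub_zero]

/-- A majorant on the annulus `r ≤ ‖w‖ ≤ r + 1 / r` of the functions of polar growth with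
constant `C`, where `A` contains the poles near the annulus. -/
def polarMajorant (C r : ℝ) (A : Finset ℂ) (w : ℂ) : ℝ≥0∞ :=
  (Metric.closedBall 0 (r + 1 / r) \ Metric.ball 0 r).indicator
      (fun _ ↦ ENNReal.ofReal (C * (2 + r))) w +
    ∑ a ∈ A, ENNReal.ofReal C * poleKernel (1 / r) (w - a)

lemma measurable_ofReal_mul_poleKernel_sub (C s : ℝ) (a : ℂ) :
    Measurable fun w ↦ ENNReal.ofReal C * poleKernel s (w - a) :=
  ((measurable_poleKernel s).comp (measurable_id.sub_const a)).const_mul _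

lemma measurable_polarMajorant (C r : ℝ) (A : Finset ℂ) : Measurable (polarMajorant C r A) :=
  (measurable_const.indicator (measurableSet_closedBall.diff measurableSet_ball)).add
    (Finset.measurable_fun_sum _ fun a _ ↦ measurable_ofReal_mul_poleKernel_sub C _ a)

lemma volume_annulus_le {r : ℝ} (hr : 1 ≤ r) :
    volume (Metric.closedBall (0 : ℂ) (r + 1 / r) \ Metric.ball 0 r) ≤
      ENNReal.ofReal (Real.pi * 3) := by
  have hr0 : 0 < r := by linarith
  rw [volume_closedBall_sdiff_ball hr0.le (le_add_of_nonneg_right (by positivity))]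
  gcongr
  calc (r + 1 / r) ^ 2 - r ^ 2 = 2 + (1 / r) ^ 2 := by field_simp; ring
    _ ≤ 2 + (1 / 1) ^ 2 := by gcongr
    _ = 3 := by norm_num

lemma lintegral_polarMajorant_le {C r : ℝ} (hC : 0 ≤ C) (hr : 2 ≤ r) (A : Finset ℂ) :
    ∫⁻ w, polarMajorant C r A w ≤
      ENNReal.ofReal (2 * Real.pi * (C * (3 * r ^ 2 + A.card)) * (1 / r)) := by
  have hmeas : MeasurableSet (Metric.closedBall (0 : ℂ) (r + 1 / r) \ Metric.ball 0 r) :=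
    measurableSet_closedBall.diff measurableSet_ball
  have hpole (a : ℂ) : ∫⁻ w, ENNReal.ofReal C * poleKernel (1 / r) (w - a) =
      ENNReal.ofReal (C * (2 * Real.pi * (1 / r))) := by
    rw [lintegral_const_mul' _ _ ENNReal.ofReal_ne_top,
      lintegral_sub_right_eq_self (poleKernel (1 / r)) a, lintegral_poleKernel,
      ← ENNReal.ofReal_mul hC]
  simp only [polarMajorant]
  rw [lintegral_add_left (measurable_const.indicator hmeas), lintegral_indicator hmeas,
    setLIntegral_const, lintegral_finsetSum _ fun a _ ↦ measurable_ofReal_mul_poleKernel_sub C _ a]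
  simp only [hpole, Finset.sum_const, nsmul_eq_mul]
  calc _ ≤ ENNReal.ofReal (C * (r + r)) * ENNReal.ofReal (Real.pi * 3) +
        A.card * ENNReal.ofReal (C * (2 * Real.pi * (1 / r))) := by
        gcongr
        exact volume_annulus_le (by linarith)
    _ = ENNReal.ofReal (C * (r + r) * (Real.pi * 3) + A.card * (C * (2 * Real.pi * (1 / r)))) := by
        rw [← ENNReal.ofReal_mul (by positivity), ← ENNReal.ofReal_natCast,
          ← ENNReal.ofReal_mul (by positivity), ENNReal.ofReal_add (by positivity) (by positivity)]
    _ = _ := by congr 1; field_simp; ring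

lemma enorm_le_polarMajorant {Λ : Set ℂ} {A : Finset ℂ} {C r : ℝ} (hC : 0 ≤ C) (hr : 1 ≤ r)
    (hA : ∀ a ∈ Λ, |‖a‖ - r| ≤ 2 / r → a ∈ A) {w u : ℂ} (hrw : r ≤ ‖w‖) (hwr : ‖w‖ ≤ r + 1 / r)
    (hu : PolarBound Λ C w u) : ‖u‖ₑ ≤ polarMajorant C r A w := by
  have hr0 : 0 < r := by linarith
  rw [← ofReal_norm, polarMajorant]
  rcases hu with hlin | ⟨a, ha, hwa, hpole⟩
  · have hmem : w ∈ Metric.closedBall 0 (r + 1 / r) \ Metric.ball 0 r :=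
      ⟨mem_closedBall_zero_iff.2 hwr, fun h ↦ (mem_ball_zero_iff.1 h).not_ge hrw⟩
    refine le_add_right ?_
    rw [Set.indicator_of_mem hmem]
    refine ENNReal.ofReal_le_ofReal (hlin.trans ?_)
    exact mul_le_mul_of_nonneg_left (by linarith [(div_le_one hr0).2 hr]) hC
  · obtain ⟨hdist, har⟩ := norm_sub_le_and_abs_norm_sub_le hr0 hrw hwr hwa
    have hkernel : poleKernel (1 / r) (w - a) = ENNReal.ofReal ‖w - a‖⁻¹ :=
      Set.indicator_of_mem (mem_closedBall_zero_iff.2 hdist) _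
    refine le_add_left (le_trans ?_ (Finset.single_le_sum_of_canonicallyOrdered
      (f := fun a ↦ ENNReal.ofReal C * poleKernel (1 / r) (w - a)) (hA a ha har)))
    rw [hkernel, ← ENNReal.ofReal_mul hC, ← div_eq_mul_inv]
    exact ENNReal.ofReal_le_ofReal hpole

end Averaging

/-! ### Sums of residues -/

section ResidueSum

variable {f res : ℂ → ℂ} {Λ : Set ℂ}

lemma circleIntegral_eq_finsum_residues (hΛ : Λᶜ ∈ codiscrete ℂ)
    (hd : ∀ z ∉ Λ, DifferentiableAt ℂ f z) (hres : ∀ a ∈ Λ, HasResidue f a (res a)) {t : ℝ}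
    (ht : 0 ≤ t) (hsphere : ∀ z ∈ Λ, ‖z‖ ≠ t) :
    ∮ z in C(0, t), f z =
      2 * Real.pi * Complex.I * ∑ᶠ a ∈ Λ ∩ Metric.closedBall 0 t, res a := by
  have hfin := finite_inter_of_compl_mem_codiscrete hΛ (isCompact_closedBall (0 : ℂ) t)
  rw [finsum_mem_eq_finite_toFinset_sum _ hfin]
  refine circleIntegral_eq_sum_residues ht (fun a ha ↦ ?_) (fun z hz hzF ↦ hd z fun hzΛ ↦
    hzF (hfin.mem_toFinset.2 ⟨hzΛ, hz⟩)) fun a ha ↦ hres a (hfin.mem_toFinset.1 ha).1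
  obtain ⟨haΛ, hat⟩ := hfin.mem_toFinset.1 ha
  exact mem_ball_zero_iff.2 ((mem_closedBall_zero_iff.1 hat).lt_of_ne (hsphere a haΛ))

lemma exists_norm_finsum_residues_le (hΛ : Λᶜ ∈ codiscrete ℂ)
    (hd : ∀ z ∉ Λ, DifferentiableAt ℂ f z) (hres : ∀ a ∈ Λ, HasResidue f a (res a)) {C : ℝ}
    (hC : 0 ≤ C) (hf : ∀ᶠ w in codiscrete ℂ, PolarBound Λ C w (f w)) {r : ℝ}
    (hr : 2 ≤ r) {A : Finset ℂ} (hA : ∀ a ∈ Λ, |‖a‖ - r| ≤ 2 / r → a ∈ A) :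
    ∃ t ∈ Set.Ioo r (r + 1 / r),
      ‖∑ᶠ a ∈ Λ ∩ Metric.closedBall 0 t, res a‖ ≤ C * (3 * r ^ 2 + A.card) := by
  have hr0 : 0 < r := by linarith
  set G := {w | PolarBound Λ C w (f w)}
  have hG : Gᶜ.Countable := countable_of_compl_mem_codiscrete (by rwa [compl_compl])
  obtain ⟨t, ht, htT, hint⟩ := exists_circleLIntegral_le (measurable_polarMajorant C r A) hr0.le
    (lt_add_of_pos_right r (one_div_pos.2 hr0))
    ((hG.union (countable_of_compl_mem_codiscrete hΛ)).image norm)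
  refine ⟨t, ht, ?_⟩
  have ht0 : 0 ≤ t := hr0.le.trans ht.1.le
  have hbound := enorm_circleIntegral_le ht0 (f := f) (Ψ := polarMajorant C r A) fun w hw ↦
    enorm_le_polarMajorant hC (by linarith) hA (hw ▸ ht.1.le) (hw ▸ ht.2.le)
      (not_not.1 fun h ↦ htT ⟨w, Or.inl h, hw⟩)
  rw [circleIntegral_eq_finsum_residues hΛ hd hres ht0 fun z hz hzt ↦ htT ⟨z, Or.inr hz, hzt⟩]
    at hbound
  have hreal := (hbound.trans hint).trans (ENNReal.div_le_div_right
    (lintegral_polarMajorant_le hC hr A) _)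
  rw [add_sub_cancel_left, ← ENNReal.ofReal_div_of_pos (by positivity),
    mul_div_cancel_right₀ _ (by positivity), ← ofReal_norm,
    ENNReal.ofReal_le_ofReal_iff (by positivity), norm_mul] at hreal
  have hpi : ‖2 * (Real.pi : ℂ) * Complex.I‖ = 2 * Real.pi := by
    rw [norm_mul, norm_mul, Complex.norm_I, Complex.norm_two, Complex.norm_real,
      Real.norm_of_nonneg Real.pi_pos.le, mul_one]
  rw [hpi] at hreal
  exact le_of_mul_le_mul_left hreal (by positivity)

lemma norm_finsum_mem_sdiff_le {B : ℝ} (hB : ∀ a ∈ Λ, ‖res a‖ ≤ B) (hB0 : 0 ≤ B) {A : Finset ℂ}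
    {r t : ℝ} (hA : ∀ a ∈ Λ, r ≤ ‖a‖ → ‖a‖ ≤ t → a ∈ A) :
    ‖∑ᶠ a ∈ (Λ ∩ Metric.closedBall 0 t) \ (Λ ∩ Metric.closedBall 0 r), res a‖ ≤ B * A.card := by
  set D := (Λ ∩ Metric.closedBall 0 t) \ (Λ ∩ Metric.closedBall 0 r)
  have hDA : D ⊆ A := fun a ⟨⟨haΛ, hat⟩, har⟩ ↦ by
    have hra : r < ‖a‖ := by
      rw [← not_le, ← mem_closedBall_zero_iff]
      exact fun h ↦ har ⟨haΛ, h⟩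
    exact hA a haΛ hra.le (mem_closedBall_zero_iff.1 hat)
  have hD : D.Finite := A.finite_toSet.subset hDA
  rw [finsum_mem_eq_finite_toFinset_sum _ hD, mul_comm]
  calc ‖∑ a ∈ hD.toFinset, res a‖ ≤ ∑ _a ∈ hD.toFinset, B :=
        norm_sum_le_of_le _ fun a ha ↦ hB a (hD.mem_toFinset.1 ha).1.1
    _ = hD.toFinset.card * B := by rw [Finset.sum_const, nsmul_eq_mul]
    _ ≤ A.card * B := by
        gcongr
        exact hD.toFinset_subset.2 hDA

-- The circle of radius `r` may meet poles. Averaging over radii in `(r, r + 1 / r)` finds a circle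
-- where the residue theorem applies; by packing it encloses only `O(r²)` further poles.
lemma finsum_residues_isBigO (hΛ : Λᶜ ∈ codiscrete ℂ) (hsep : IsWellSeparated Λ)
    (hd : ∀ z ∉ Λ, DifferentiableAt ℂ f z) (hres : ∀ a ∈ Λ, HasResidue f a (res a))
    (hf : HasPolarGrowth f Λ) {B : ℝ} (hB : ∀ a ∈ Λ, ‖res a‖ ≤ B) :
    (fun r : ℝ ↦ ∑ᶠ a ∈ Λ ∩ Metric.closedBall 0 r, res a) =O[atTop] fun r ↦ r ^ 2 := by
  obtain ⟨C, hC, hf⟩ := hf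
  obtain ⟨K, hannulus⟩ := exists_finset_annulus hΛ hsep
  refine IsBigO.of_bound (C * (3 + K) + max B 0 * K)
    ((eventually_ge_atTop 2).mono fun r hr ↦ ?_)
  have hr0 : 0 < r := by linarith
  obtain ⟨A, hA, hcard⟩ := hannulus r hr
  obtain ⟨t, ht, hsum⟩ := exists_norm_finsum_residues_le hΛ hd hres (zero_le_one.trans hC) hf hr
    fun a haΛ har ↦ (hA a).2 ⟨haΛ, har⟩
  have hdiff := norm_finsum_mem_sdiff_le (fun a ha ↦ (hB a ha).trans (le_max_left B 0))
    (le_max_right B 0) (A := A) (r := r) (t := t) fun a haΛ hra hat ↦ (hA a).2 ⟨haΛ, by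
      have h2r : 2 / r = 1 / r + 1 / r := by ring
      have := one_div_pos.2 hr0
      exact abs_le.2 ⟨by linarith, by linarith [ht.2]⟩⟩
  have hsplit := finsum_mem_add_sdiff (f := res) (Set.inter_subset_inter_right Λ
    (Metric.closedBall_subset_closedBall ht.1.le))
    (finite_inter_of_compl_mem_codiscrete hΛ (isCompact_closedBall (0 : ℂ) t))
  rw [eq_sub_of_add_eq hsplit, norm_pow, Real.norm_of_nonneg hr0.le]
  calc _ ≤ C * (3 * r ^ 2 + A.card) + max B 0 * A.card :=
        (norm_sub_le _ _).trans (add_le_add hsum hdiff)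
    _ ≤ C * (3 * r ^ 2 + K * r ^ 2) + max B 0 * (K * r ^ 2) := by gcongr
    _ = _ := by ring

end ResidueSum

lemma re_eq_neg_half_of_pow_three_eq_one {u : ℂ} (hu : u ^ 3 = 1) (hu1 : u ≠ 1) :
    u.re = -1 / 2 := by
  have hquad : u ^ 2 + u + 1 = 0 := (mul_eq_zero.1 (show (u - 1) * (u ^ 2 + u + 1) = 0 by
    linear_combination hu)).resolve_left (sub_ne_zero.2 hu1)
  have hconj : u * conj u = 1 := by
    rw [Complex.mul_conj', Complex.norm_eq_one_of_pow_eq_one hu three_ne_zero]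
    norm_num
  have hsum : u + conj u = -1 := by linear_combination conj u * hquad + (-u - 1) * hconj
  have := congrArg Complex.re hsum
  rw [Complex.add_re, Complex.conj_re, Complex.neg_re, Complex.one_re] at this
  linarith

lemma ite_eq_of_pow_three_eq_one [DecidableEq ℂ] {ρ u : ℂ} (hρ : ρ ^ 3 = 1) (hu : u ^ 3 = 1) :
    (if u = ρ then (1 : ℝ) else 0) = 2 / 3 * (conj ρ * u).re + 1 / 3 := by
  have hconj : conj ρ * ρ = 1 := by
    rw [Complex.conj_mul', Complex.norm_eq_one_of_pow_eq_one hρ three_ne_zero]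
    norm_num
  have hcube : (conj ρ * u) ^ 3 = 1 := by rw [mul_pow, hu, ← map_pow, hρ, map_one, one_mul]
  split_ifs with huρ
  · rw [huρ, hconj, Complex.one_re]
    norm_num
  · have hne : conj ρ * u ≠ 1 := fun h ↦ huρ (by linear_combination ρ * h - u * hconj)
    rw [re_eq_neg_half_of_pow_three_eq_one hcube hne]
    norm_num

lemma setCount_sub_third_mul_setCount {Λ : Set ℂ} {res : ℂ → ℂ} {ρ : ℂ} {r : ℝ}
    (hfin : (Λ ∩ Metric.closedBall 0 r).Finite) (hres : ∀ a ∈ Λ, res a ^ 3 = 1) (hρ : ρ ^ 3 = 1) :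
    setCount {z | z ∈ Λ ∧ res z = ρ} r - 1 / 3 * setCount Λ r =
      2 / 3 * (conj ρ * ∑ᶠ a ∈ Λ ∩ Metric.closedBall 0 r, res a).re := by
  classical
  have hfilter : {z | z ∈ Λ ∧ res z = ρ} ∩ Metric.closedBall 0 r =
      (hfin.toFinset.filter (res · = ρ) : Set ℂ) := by
    ext z
    simp only [Finset.coe_filter, hfin.mem_toFinset, Set.mem_inter_iff, Set.mem_ofPred_eq]
    tauto
  have hindicator (a) (ha : a ∈ hfin.toFinset) :=
    ite_eq_of_pow_three_eq_one hρ (hres a (hfin.mem_toFinset.1 ha).1)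
  rw [setCount, setCount, hfilter, Set.ncard_coe_finset, Finset.natCast_card_filter,
    Finset.sum_congr rfl hindicator, Set.ncard_eq_toFinset_card _ hfin,
    finsum_mem_eq_finite_toFinset_sum _ hfin, Finset.sum_add_distrib, ← Finset.mul_sum,
    ← Complex.re_sum, ← Finset.mul_sum, Finset.sum_const, nsmul_eq_mul]
  ring

lemma setCount_sub_third_isBigO {f res : ℂ → ℂ} {Λ : Set ℂ} (hΛ : Λᶜ ∈ codiscrete ℂ)
    (hsep : IsWellSeparated Λ) (hd : ∀ z ∉ Λ, DifferentiableAt ℂ f z)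
    (hres : ∀ a ∈ Λ, HasResidue f a (res a)) (hf : HasPolarGrowth f Λ)
    (hcube : ∀ a ∈ Λ, res a ^ 3 = 1) {ρ : ℂ} (hρ : ρ ^ 3 = 1) :
    (fun r ↦ setCount {z | z ∈ Λ ∧ res z = ρ} r - 1 / 3 * setCount Λ r)
      =O[atTop] fun r ↦ r ^ 2 := by
  have hsum := finsum_residues_isBigO hΛ hsep hd hres hf fun a ha ↦
    (Complex.norm_eq_one_of_pow_eq_one (hcube a ha) three_ne_zero).le
  refine (IsBigO.of_bound (2 / 3) (.of_forall fun r ↦ ?_)).trans hsum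
  rw [setCount_sub_third_mul_setCount
    (finite_inter_of_compl_mem_codiscrete hΛ (isCompact_closedBall 0 r)) hcube hρ, norm_mul,
    Real.norm_of_nonneg (by norm_num)]
  gcongr
  refine (Complex.abs_re_le_norm _).trans_eq ?_
  rw [norm_mul, RCLike.norm_conj, Complex.norm_eq_one_of_pow_eq_one hρ three_ne_zero, one_mul]

/-! ### The Nevanlinna characteristic -/

lemma proximity_eq_circleAverage (f : ℂ → ℂ) (r : ℝ) :
    proximity f r = Real.circleAverage (fun z ↦ Real.posLog ‖f z‖) 0 r := by
  simp only [proximity, logPlus, Real.circleAverage_def, smul_eq_mul, circleMap, zero_add,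
    Real.posLog]

lemma circleAverage_log_sub_log_norm_sub_le {r : ℝ} (hr : 0 < r) (a : ℂ) :
    Real.circleAverage (fun w ↦ Real.log (3 * r) - Real.log ‖w - a‖) 0 r ≤ Real.log 3 := by
  rw [Real.circleAverage_fun_sub (circleIntegrable_const _ _ _)
    (circleIntegrable_log_norm_sub_const r), Real.circleAverage_const,
    circleAverage_log_norm_sub_const_eq_log_radius_add_posLog hr.ne',
    Real.log_mul three_ne_zero hr.ne']
  linarith [Real.posLog_nonneg (x := r⁻¹ * ‖0 - a‖)]

lemma posLog_inv_le_log_sub_log {x R : ℝ} (hx : 0 ≤ x) (hxR : x ≤ R) (hR : 1 ≤ R) :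
    Real.posLog x⁻¹ ≤ Real.log R - Real.log x := by
  rw [← Real.posLog_eq_log (hR.trans (le_abs_self R)), ← Real.posLog_sub_posLog_inv (x := x)]
  linarith [Real.posLog_le_posLog hx hxR]

lemma posLog_norm_le_of_polarBound {f : ℂ → ℂ} {Λ : Set ℂ} {A : Finset ℂ} {C r : ℝ} {w : ℂ}
    (hC : 1 ≤ C) (hr : 2 ≤ r) (hA : ∀ a, a ∈ A ↔ a ∈ Λ ∧ |‖a‖ - r| ≤ 2 / r) (hw : ‖w‖ = r)
    (hfw : PolarBound Λ C w (f w)) :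
    Real.posLog ‖f w‖ ≤ Real.posLog (C * (1 + r)) +
      ∑ a ∈ A, (Real.log (3 * r) - Real.log ‖w - a‖) := by
  have hr0 : 0 < r := by linarith
  have h2r : 2 / r ≤ r := by rw [div_le_iff₀ hr0]; nlinarith
  have hterm (a) (ha : a ∈ A) :
      Real.posLog ‖w - a‖⁻¹ ≤ Real.log (3 * r) - Real.log ‖w - a‖ :=
    posLog_inv_le_log_sub_log (norm_nonneg _)
      (by linarith [norm_sub_le w a, (abs_le.1 ((hA a).1 ha).2).2]) (by linarith)
  have hterm_nonneg (a) (ha : a ∈ A) := Real.posLog_nonneg.trans (hterm a ha)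
  rcases hfw with hfw | ⟨a, haΛ, hwa, hfw⟩
  · rw [hw] at hfw
    exact (Real.posLog_le_posLog (norm_nonneg _) hfw).trans
      (le_add_of_nonneg_right (Finset.sum_nonneg hterm_nonneg))
  · have haA : a ∈ A := (hA a).2 ⟨haΛ, (norm_sub_le_and_abs_norm_sub_le hr0 hw.ge
      (by rw [hw]; linarith [one_div_pos.2 hr0]) hwa).2⟩
    calc Real.posLog ‖f w‖ ≤ Real.posLog (C * ‖w - a‖⁻¹) :=
          Real.posLog_le_posLog (norm_nonneg _) hfw
      _ ≤ Real.posLog C + Real.posLog ‖w - a‖⁻¹ := Real.posLog_mul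
      _ ≤ _ := add_le_add (Real.posLog_le_posLog (by linarith) (by nlinarith))
          ((hterm a haA).trans (Finset.single_le_sum hterm_nonneg haA))

lemma circleAverage_mono_of_codiscreteWithin {f g : ℂ → ℝ} {c : ℂ} {R : ℝ}
    (hf : CircleIntegrable f c R) (hg : CircleIntegrable g c R) (hR : R ≠ 0)
    (hfg : f ≤ᶠ[codiscreteWithin (Metric.sphere c |R|)] g) :
    Real.circleAverage f c R ≤ Real.circleAverage g c R := by
  have hsup : (f ⊔ g) =ᶠ[codiscreteWithin (Metric.sphere c |R|)] g :=
    hfg.mono fun _ ↦ sup_of_le_right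
  rw [← Real.circleAverage_congr_codiscreteWithin hsup hR]
  exact Real.circleAverage_mono hf (hg.congr_codiscreteWithin hsup.symm) fun _ _ ↦ le_sup_left

lemma circleIntegrable_const_add_sum_log (A : Finset ℂ) (b r : ℝ) :
    CircleIntegrable (fun w ↦ b + ∑ a ∈ A, (Real.log (3 * r) - Real.log ‖w - a‖)) 0 r :=
  (circleIntegrable_const _ _ _).add <| CircleIntegrable.fun_sum A fun _ _ ↦
    (circleIntegrable_const _ _ _).sub (circleIntegrable_log_norm_sub_const r)

lemma circleAverage_const_add_sum_log_le (A : Finset ℂ) (b : ℝ) {r : ℝ} (hr : 0 < r) :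
    Real.circleAverage (fun w ↦ b + ∑ a ∈ A, (Real.log (3 * r) - Real.log ‖w - a‖)) 0 r ≤
      b + A.card * Real.log 3 := by
  have hint (a) (_ : a ∈ A) :
      CircleIntegrable (fun w ↦ Real.log (3 * r) - Real.log ‖w - a‖) 0 r :=
    (circleIntegrable_const _ _ _).sub (circleIntegrable_log_norm_sub_const r)
  rw [Real.circleAverage_fun_add (circleIntegrable_const _ _ _) (CircleIntegrable.fun_sum A hint),
    Real.circleAverage_const, Real.circleAverage_fun_sum hint, ← nsmul_eq_mul]
  gcongr
  exact Finset.sum_le_card_nsmul _ _ _ fun a _ ↦ circleAverage_log_sub_log_norm_sub_le hr a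

lemma proximity_isBigO {f : ℂ → ℂ} {Λ : Set ℂ} (hf : MeromorphicOn f Set.univ)
    (hΛ : Λᶜ ∈ codiscrete ℂ) (hsep : IsWellSeparated Λ) (hgrowth : HasPolarGrowth f Λ) :
    proximity f =O[atTop] fun r ↦ r ^ 2 := by
  obtain ⟨C, hC, hbound⟩ := hgrowth
  obtain ⟨K, hcard⟩ := exists_finset_annulus hΛ hsep
  refine IsBigO.of_bound (C + K * Real.log 3) ?_
  filter_upwards [eventually_ge_atTop 2] with r hr
  obtain ⟨A, hA, hAcard⟩ := hcard r hr
  have hr0 : 0 < r := by linarith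
  have hf_int : CircleIntegrable (fun z ↦ Real.posLog ‖f z‖) 0 r :=
    MeromorphicOn.circleIntegrable_posLog_norm fun z _ ↦ hf z (Set.mem_univ z)
  rw [proximity_eq_circleAverage, Real.norm_of_nonneg
    (Real.circleAverage_nonneg_of_nonneg fun _ _ ↦ Real.posLog_nonneg),
    Real.norm_of_nonneg (by positivity)]
  have hlogC : Real.posLog (C * (1 + r)) ≤ C * r ^ 2 := by
    have hCr : 1 ≤ C * (1 + r) := by nlinarith
    rw [Real.posLog_eq_log (hCr.trans (le_abs_self _))]
    refine (Real.log_le_sub_one_of_pos (by linarith)).trans ?_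
    nlinarith
  calc _ ≤ Real.posLog (C * (1 + r)) + A.card * Real.log 3 := by
        refine (circleAverage_mono_of_codiscreteWithin hf_int
          (circleIntegrable_const_add_sum_log A _ r) hr0.ne' ?_).trans
          (circleAverage_const_add_sum_log_le A _ hr0)
        filter_upwards [self_mem_codiscreteWithin _, codiscreteWithin_mono (Set.subset_univ _)
          hbound] with w hw hfw
        rw [mem_sphere_zero_iff_norm, abs_of_pos hr0] at hw
        exact posLog_norm_le_of_polarBound hC hr hA hw hfw
    _ ≤ C * r ^ 2 + K * r ^ 2 * Real.log 3 := by
        gcongr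
    _ = (C + K * Real.log 3) * r ^ 2 := by ring

lemma poleMult_eq_zero_of_tendsto {f : ℂ → ℂ} {a c : ℂ} (h : Tendsto f (𝓝[≠] a) (𝓝 c)) :
    poleMult f a = 0 :=
  Nat.sInf_eq_zero.2 <| Or.inl ⟨c, by simpa only [pow_zero, one_mul] using h⟩

lemma _root_.HasResidue.poleMult_le_one {f : ℂ → ℂ} {a ρ : ℂ} (h : HasResidue f a ρ) :
    poleMult f a ≤ 1 :=
  Nat.sInf_le ⟨ρ, by simp only [pow_one]; exact h⟩

section CountingFunction

variable {f : ℂ → ℂ} {Λ : Set ℂ}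

lemma nPoles_eq_sum (hΛ : Λᶜ ∈ codiscrete ℂ) (hmult : ∀ z ∉ Λ, poleMult f z = 0) (t : ℝ) :
    nPoles f t = ∑ z ∈ (finite_inter_of_compl_mem_codiscrete hΛ
      (isCompact_closedBall (0 : ℂ) t)).toFinset, (poleMult f z : ℝ) := by
  refine finsum_mem_eq_sum_of_inter_support_eq _ (Set.ext fun z ↦ ?_)
  have : (poleMult f z : ℝ) ≠ 0 → z ∈ Λ := fun h ↦ by_contra fun hz ↦ h (by simp [hmult z hz])
  simp only [Set.mem_inter_iff, Function.mem_support, Set.Finite.coe_toFinset]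
  tauto

lemma nPoles_mono (hΛ : Λᶜ ∈ codiscrete ℂ) (hmult : ∀ z ∉ Λ, poleMult f z = 0) :
    Monotone (nPoles f) := fun s t hst ↦ by
  rw [nPoles_eq_sum hΛ hmult, nPoles_eq_sum hΛ hmult]
  refine Finset.sum_le_sum_of_subset_of_nonneg ?_ fun _ _ _ ↦ Nat.cast_nonneg _
  rw [Set.Finite.toFinset_subset_toFinset]
  exact Set.inter_subset_inter_right _ (Metric.closedBall_subset_closedBall hst)

lemma nPoles_le_setCount (hΛ : Λᶜ ∈ codiscrete ℂ) (hmult : ∀ z ∉ Λ, poleMult f z = 0)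
    (hsimple : ∀ z ∈ Λ, poleMult f z ≤ 1) (t : ℝ) : nPoles f t ≤ setCount Λ t := by
  have hfin := finite_inter_of_compl_mem_codiscrete hΛ (isCompact_closedBall (0 : ℂ) t)
  rw [nPoles_eq_sum hΛ hmult, setCount, Set.ncard_eq_toFinset_card _ hfin, ← nsmul_one]
  refine Finset.sum_le_card_nsmul _ _ _ fun z hz ↦ ?_
  exact_mod_cast hsimple z (hfin.mem_toFinset.1 hz).1

lemma nPoles_eventuallyEq_nPoles_zero (hΛ : Λᶜ ∈ codiscrete ℂ)
    (hmult : ∀ z ∉ Λ, poleMult f z = 0) : ∀ᶠ t in 𝓝[>] 0, nPoles f t = nPoles f 0 := by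
  obtain ⟨δ, hδ, hball⟩ := Metric.eventually_nhds_iff.1
    (eventually_nhdsWithin_iff.1 (eventually_notMem_nhdsNE hΛ 0))
  filter_upwards [Ioo_mem_nhdsGT hδ] with t ht
  rw [nPoles_eq_sum hΛ hmult, nPoles_eq_sum hΛ hmult]
  suffices hset : Λ ∩ Metric.closedBall 0 t = Λ ∩ Metric.closedBall 0 0 by simp only [hset]
  refine Set.ext fun z ↦ and_congr_right fun hz ↦ ?_
  rw [mem_closedBall_zero_iff, mem_closedBall_zero_iff]
  refine ⟨fun hzt ↦ ?_, fun hz0 ↦ hz0.trans ht.1.le⟩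
  by_contra! hz0
  refine hball (y := z) ?_ (norm_pos_iff.1 hz0) hz
  rw [dist_zero_right]
  exact hzt.trans_lt ht.2

end CountingFunction

lemma exists_norm_le_mul_sq_of_monotone {n : ℝ → ℝ} (hn : Monotone n)
    (hzero : ∀ᶠ t in 𝓝[>] 0, n t = 0) (hO : n =O[atTop] fun t ↦ t ^ 2) :
    ∃ K, ∀ t > 0, ‖n t‖ ≤ K * t ^ 2 := by
  obtain ⟨δ, hδ : 0 < δ, hzero⟩ := (mem_nhdsGT_iff_exists_Ioo_subset).1 hzero
  obtain ⟨C, hC⟩ := hO.bound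
  obtain ⟨R, hC⟩ := eventually_atTop.1 hC
  have hpos (t) (ht : 0 < t) : 0 ≤ n t := by
    have hs : min t (δ / 2) ∈ Set.Ioo 0 δ :=
      ⟨lt_min ht (half_pos hδ), (min_le_right _ _).trans_lt (half_lt_self hδ)⟩
    exact (hzero hs).ge.trans (hn (min_le_left _ _))
  refine ⟨max C (‖n R‖ / δ ^ 2), fun t ht ↦ ?_⟩
  rcases le_total R t with hRt | htR
  · refine (hC t hRt).trans ?_
    rw [Real.norm_of_nonneg (sq_nonneg t)]
    gcongr
    exact le_max_left _ _
  rcases lt_or_ge t δ with htδ | hδt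
  · rw [hzero ⟨ht, htδ⟩, norm_zero]
    positivity
  · have hnR : ‖n t‖ ≤ ‖n R‖ := by
      rw [Real.norm_of_nonneg (hpos t ht)]
      exact (hn htR).trans (le_abs_self _)
    calc ‖n t‖ ≤ ‖n R‖ / δ ^ 2 * δ ^ 2 := by rwa [div_mul_cancel₀ _ (by positivity)]
      _ ≤ max C (‖n R‖ / δ ^ 2) * t ^ 2 := by
        gcongr
        exact le_max_right _ _

lemma integral_div_isBigO {n : ℝ → ℝ} {K : ℝ} (hn : ∀ t > 0, ‖n t‖ ≤ K * t ^ 2) :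
    (fun r ↦ ∫ t in (0 : ℝ)..r, n t / t) =O[atTop] fun r ↦ r ^ 2 := by
  refine IsBigO.of_bound K ?_
  filter_upwards [eventually_gt_atTop 0] with r hr
  have hK : 0 ≤ K := by
    have := (norm_nonneg _).trans (hn 1 one_pos)
    linarith
  have hbound (t) (ht : t ∈ Set.uIoc 0 r) : ‖n t / t‖ ≤ K * r := by
    rw [Set.uIoc_of_le hr.le] at ht
    rw [norm_div, Real.norm_of_nonneg ht.1.le, div_le_iff₀ ht.1]
    calc ‖n t‖ ≤ K * t * t := by rw [mul_assoc, ← sq]; exact hn t ht.1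
      _ ≤ K * r * t := by have := ht.1; gcongr; exact ht.2
  calc _ ≤ K * r * |r - 0| := intervalIntegral.norm_integral_le_of_norm_le_const hbound
    _ = K * ‖r ^ 2‖ := by
      rw [sub_zero, abs_of_pos hr, Real.norm_of_nonneg (sq_nonneg r)]
      ring

lemma countingN_isBigO {f : ℂ → ℂ} {Λ : Set ℂ} (hΛ : Λᶜ ∈ codiscrete ℂ)
    (hmult : ∀ z ∉ Λ, poleMult f z = 0) (hsimple : ∀ z ∈ Λ, poleMult f z ≤ 1)
    (hcount : setCount Λ =O[atTop] fun r ↦ r ^ 2) :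
    countingN f =O[atTop] fun r ↦ r ^ 2 := by
  have hlog : Real.log =O[atTop] fun r : ℝ ↦ r ^ 2 :=
    (Real.isLittleO_log_id_atTop.trans
      ((isLittleO_pow_pow_atTop_of_lt one_lt_two).congr_left pow_one)).isBigO
  have hnPoles : nPoles f =O[atTop] fun r ↦ r ^ 2 := by
    refine (IsBigO.of_norm_le fun t ↦ ?_).trans hcount
    have : 0 ≤ nPoles f t := finsum_nonneg fun _ ↦ finsum_nonneg fun _ ↦ Nat.cast_nonneg _
    rw [Real.norm_of_nonneg this]
    exact nPoles_le_setCount hΛ hmult hsimple t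
  obtain ⟨K, hK⟩ := exists_norm_le_mul_sq_of_monotone (n := fun t ↦ nPoles f t - nPoles f 0)
    (fun s t hst ↦ sub_le_sub_right (nPoles_mono hΛ hmult hst) _)
    ((nPoles_eventuallyEq_nPoles_zero hΛ hmult).mono fun t ht ↦ sub_eq_zero.2 ht)
    (hnPoles.sub (Real.isLittleO_const_log_atTop.isBigO.trans hlog))
  exact (integral_div_isBigO hK).add (hlog.const_mul_left _)

/-! ### Meromorphic solutions -/

lemma setCount_isBigO_of_finite {S : Set ℂ} (hS : S.Finite) :
    setCount S =O[atTop] fun r ↦ r ^ 2 := by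
  refine IsBigO.of_bound S.ncard ?_
  filter_upwards [eventually_ge_atTop 1] with r hr
  rw [setCount, Real.norm_natCast, norm_pow, Real.norm_of_nonneg (by linarith)]
  calc ((S ∩ Metric.closedBall 0 r).ncard : ℝ) ≤ S.ncard :=
        Nat.cast_le.2 (Set.ncard_le_ncard Set.inter_subset_left hS)
    _ ≤ S.ncard * r ^ 2 := le_mul_of_one_le_right (Nat.cast_nonneg _) (one_le_pow₀ hr)

lemma isPole_iff_of_eventuallyEq {f g : ℂ → ℂ} {a : ℂ} (h : f =ᶠ[𝓝[≠] a] g) :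
    IsPole f a ↔ IsPole g a :=
  tendsto_congr' (h.mono fun _ ↦ congrArg norm)

lemma HasPolarGrowth.congr {f g : ℂ → ℂ} {Λ : Set ℂ} (hf : HasPolarGrowth f Λ)
    (h : f =ᶠ[codiscrete ℂ] g) : HasPolarGrowth g Λ := by
  obtain ⟨C, hC, hbound⟩ := hf
  refine ⟨C, hC, ?_⟩
  filter_upwards [hbound, h] with w hw hfg
  rwa [← hfg]

lemma hasDerivAt_of_eventuallyEq_deriv {f g : ℂ → ℂ} {a : ℂ} (hf : AnalyticAt ℂ f a)
    (hg : ContinuousAt g a) (h : deriv f =ᶠ[𝓝[≠] a] g) : HasDerivAt f (g a) a := by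
  rw [← ((hf.deriv.continuousAt.eventuallyEq_nhds_iff_eventuallyEq_nhdsNE hg).1 h).eq_of_nhds]
  exact hf.differentiableAt.hasDerivAt

lemma tendsto_norm_atTop_of_not_analyticAt {f : ℂ → ℂ} {a : ℂ} (hf : MeromorphicNFAt f a)
    (ha : ¬ AnalyticAt ℂ f a) : Tendsto (fun z ↦ ‖f z‖) (𝓝[≠] a) atTop := by
  rw [← hf.meromorphicOrderAt_nonneg_iff_analyticAt, not_le] at ha
  exact tendsto_norm_cobounded_atTop.comp (tendsto_cobounded_of_meromorphicOrderAt_neg ha)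

lemma isSolutionOff_of_meromorphicNFAt {α β : ℂ} {P Q : ℂ → ℂ} (hP : ∀ z, MeromorphicNFAt P z)
    (hQ : ∀ z, MeromorphicNFAt Q z)
    (hderiv : ∀ᶠ z in codiscrete ℂ,
      deriv P z = fieldP α z (P z) (Q z) ∧ deriv Q z = fieldQ β z (P z) (Q z)) :
    IsSolutionOff α β P Q {z | AnalyticAt ℂ P z ∧ AnalyticAt ℂ Q z}ᶜ := by
  refine ⟨fun z hz ↦ ?_, fun z hz ↦ ?_, ?_, fun a ha ↦ ?_⟩
  · obtain ⟨hPz, hQz⟩ := not_not.1 hz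
    have := hPz.continuousAt
    have := hQz.continuousAt
    exact hasDerivAt_of_eventuallyEq_deriv (g := fun w ↦ fieldP α w (P w) (Q w)) hPz
      (by unfold fieldP; fun_prop) (nhdsNE_le_codiscrete z (hderiv.mono fun _ ↦ And.left))
  · obtain ⟨hPz, hQz⟩ := not_not.1 hz
    have := hPz.continuousAt
    have := hQz.continuousAt
    exact hasDerivAt_of_eventuallyEq_deriv (g := fun w ↦ fieldQ β w (P w) (Q w)) hQz
      (by unfold fieldQ; fun_prop) (nhdsNE_le_codiscrete z (hderiv.mono fun _ ↦ And.right))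
  · rw [compl_compl]
    have hPan := MeromorphicOn.eventually_codiscreteWithin_analyticAt (U := Set.univ) P fun z _ ↦
      (hP z).meromorphicAt
    have hQan := MeromorphicOn.eventually_codiscreteWithin_analyticAt (U := Set.univ) Q fun z _ ↦
      (hQ z).meromorphicAt
    exact hPan.and hQan
  · rcases not_and_or.1 ha with ha | ha
    · exact tendsto_atTop_mono (fun z ↦ le_add_of_nonneg_right (norm_nonneg (Q z)))
        (tendsto_norm_atTop_of_not_analyticAt (hP a) ha)
    · exact tendsto_atTop_mono (fun z ↦ le_add_of_nonneg_left (norm_nonneg (P z)))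
        (tendsto_norm_atTop_of_not_analyticAt (hQ a) ha)

lemma _root_.IsHamSolution.exists_isSolutionOff {α β : ℂ} {p q : ℂ → ℂ}
    (h : IsHamSolution α β p q) :
    ∃ P Q : ℂ → ℂ, ∃ Λ : Set ℂ, IsSolutionOff α β P Q Λ ∧ P =ᶠ[codiscrete ℂ] p ∧
      Q =ᶠ[codiscrete ℂ] q := by
  obtain ⟨hp, hq, hode⟩ := h
  have hP := (toMeromorphicNFOn_eqOn_codiscrete hp).symm
  have hQ := (toMeromorphicNFOn_eqOn_codiscrete hq).symm
  refine ⟨_, _, _, isSolutionOff_of_meromorphicNFAt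
    (fun z ↦ meromorphicNFOn_toMeromorphicNFOn p Set.univ (Set.mem_univ z))
    (fun z ↦ meromorphicNFOn_toMeromorphicNFOn q Set.univ (Set.mem_univ z)) ?_, hP, hQ⟩
  have hderiv {f g : ℂ → ℂ} (hfg : f =ᶠ[codiscrete ℂ] g) :
      deriv f =ᶠ[codiscrete ℂ] deriv g := by
    refine mem_codiscreteWithin_iff_forall_mem_nhdsNE.2 fun z _ ↦ mem_of_superset
      (hfg.filter_mono (nhdsNE_le_codiscrete z)).nhdsNE_deriv Set.subset_union_left
  filter_upwards [hP, hQ, hderiv hP, hderiv hQ, hp.eventually_codiscreteWithin_analyticAt,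
    hq.eventually_codiscreteWithin_analyticAt] with w hPw hQw hP'w hQ'w hpw hqw
  rw [hP'w, hQ'w, hPw, hQw]
  exact hode w hpw hqw

lemma IsSolutionOff.isPole_fst_iff {α β : ℂ} {P Q : ℂ → ℂ} {Λ : Set ℂ}
    (hS : IsSolutionOff α β P Q Λ) {z : ℂ} : IsPole P z ↔ z ∈ Λ := by
  refine ⟨fun hz ↦ by_contra fun hzΛ ↦ ?_, hS.tendsto_norm_fst⟩
  exact not_tendsto_nhds_of_tendsto_atTop hz _
    ((hS.hasDerivAt_fst z hzΛ).continuousAt.norm.tendsto.mono_left nhdsWithin_le_nhds)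

lemma IsSolutionOff.setCount_sub_third_isBigO {α β : ℂ} {P Q : ℂ → ℂ} {Λ : Set ℂ}
    (hS : IsSolutionOff α β P Q Λ) {ρ : ℂ} (hρ : ρ ^ 3 = 1) :
    (fun r ↦ setCount {z | z ∈ Λ ∧ HasResidue P z ρ} r - 1 / 3 * setCount Λ r)
      =O[atTop] fun r ↦ r ^ 2 := by
  choose! res hcube hres _ using fun a (ha : a ∈ Λ) ↦ hS.exists_hasResidue ha
  have hset : {z | z ∈ Λ ∧ HasResidue P z ρ} = {z | z ∈ Λ ∧ res z = ρ} :=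
    Set.ext fun z ↦ and_congr_right fun hz ↦
      ⟨tendsto_nhds_unique (hres z hz), fun h ↦ h ▸ hres z hz⟩
  rw [hset]
  exact HamSystem.setCount_sub_third_isBigO hS.compl_mem_codiscrete hS.isWellSeparated
    (fun z hz ↦ (hS.hasDerivAt_fst z hz).differentiableAt) hres hS.hasPolarGrowth_fst hcube hρ

lemma nevT_isBigO_of_eventuallyEq {f g : ℂ → ℂ} {Λ : Set ℂ} (hg : MeromorphicOn g Set.univ)
    (hfg : f =ᶠ[codiscrete ℂ] g) (hΛ : Λᶜ ∈ codiscrete ℂ) (hsep : IsWellSeparated Λ)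
    (hf : HasPolarGrowth f Λ) (hcont : ∀ a ∉ Λ, ContinuousAt f a)
    (hres : ∀ a ∈ Λ, ∃ ρ, HasResidue f a ρ) (hcount : setCount Λ =O[atTop] fun r ↦ r ^ 2) :
    nevT g =O[atTop] fun r ↦ r ^ 2 := by
  have hNE (a) : f =ᶠ[𝓝[≠] a] g := hfg.filter_mono (nhdsNE_le_codiscrete a)
  exact (proximity_isBigO hg hΛ hsep (hf.congr hfg)).add <| countingN_isBigO hΛ
    (fun a ha ↦ poleMult_eq_zero_of_tendsto
      (((hcont a ha).tendsto.mono_left nhdsWithin_le_nhds).congr' (hNE a)))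
    (fun a ha ↦ (hres a ha).elim fun _ h ↦
      ((hasResidue_iff_of_eventuallyEq (hNE a)).1 h).poleMult_le_one) hcount

lemma _root_.IsHamSolution.setCount_sub_third_isBigO {α β : ℂ} {p q : ℂ → ℂ}
    (h : IsHamSolution α β p q) {ρ : ℂ} (hρ : ρ ^ 3 = 1) :
    (fun r ↦ setCount {z | IsPole p z ∧ HasResidue p z ρ} r - 1 / 3 * setCount {z | IsPole p z} r)
      =O[atTop] fun r ↦ r ^ 2 := by
  obtain ⟨P, Q, Λ, hS, hP, -⟩ := h.exists_isSolutionOff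
  have hNE (a) : p =ᶠ[𝓝[≠] a] P := hP.symm.filter_mono (nhdsNE_le_codiscrete a)
  simpa only [isPole_iff_of_eventuallyEq (hNE _), hasResidue_iff_of_eventuallyEq (hNE _),
    hS.isPole_fst_iff, Set.ofPred_mem_eq] using hS.setCount_sub_third_isBigO hρ

lemma _root_.IsHamSolution.nevT_add_nevT_isBigO {α β : ℂ} {p q : ℂ → ℂ}
    (h : IsHamSolution α β p q) (hcount : setCount {z | IsPole p z} =O[atTop] fun r ↦ r ^ 2) :
    (fun r ↦ nevT p r + nevT q r) =O[atTop] fun r ↦ r ^ 2 := by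
  obtain ⟨P, Q, Λ, hS, hP, hQ⟩ := h.exists_isSolutionOff
  have hNE (a) : p =ᶠ[𝓝[≠] a] P := hP.symm.filter_mono (nhdsNE_le_codiscrete a)
  simp only [isPole_iff_of_eventuallyEq (hNE _), hS.isPole_fst_iff, Set.ofPred_mem_eq] at hcount
  have hres (a) (ha : a ∈ Λ) := hS.exists_hasResidue ha
  have hΛ := hS.compl_mem_codiscrete
  have hsep := hS.isWellSeparated
  exact (nevT_isBigO_of_eventuallyEq h.1 hP hΛ hsep hS.hasPolarGrowth_fst
      (fun a ha ↦ (hS.hasDerivAt_fst a ha).continuousAt)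
      (fun a ha ↦ (hres a ha).imp fun _ h ↦ h.2.1) hcount).add
    (nevT_isBigO_of_eventuallyEq h.2.1 hQ hΛ hsep hS.hasPolarGrowth_snd
      (fun a ha ↦ (hS.hasDerivAt_snd a ha).continuousAt)
      (fun a ha ↦ (hres a ha).elim fun _ h ↦ ⟨_, h.2.2⟩) hcount)

end

end HamSystem

theorem stmt_9_general {α β : ℂ} {p q : ℂ → ℂ} (h : IsHamSolution α β p q) :
    (∀ ρ : ℂ, ρ ^ 3 = 1 →
      (fun r ↦ setCount {z | IsPole p z ∧ HasResidue p z ρ} r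
          - (1 / 3) * setCount {z | IsPole p z} r) =O[atTop] fun r ↦ r ^ 2) ∧
    ((∃ ρ : ℂ, ρ ^ 3 = 1 ∧
        setCount {z | IsPole p z ∧ HasResidue p z ρ} =O[atTop] fun r ↦ r ^ 2) →
      (fun r ↦ nevT p r + nevT q r) =O[atTop] fun r ↦ r ^ 2) := by
  refine ⟨fun _ ↦ h.setCount_sub_third_isBigO, fun ⟨ρ, hρ, hcount⟩ ↦ h.nevT_add_nevT_isBigO ?_⟩
  refine ((hcount.sub (h.setCount_sub_third_isBigO hρ)).const_mul_left 3).congr_left fun r ↦ ?_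
  ring

/-- For a transcendental solution `(p, q)` of the Hamiltonian system, the
counting functions of the poles with residue `ρ` (`ρ³ = 1`) satisfy
`n(r, Λ^ρ) = (1/3)·n(r, Λ) + O(r²)`; in particular, if one kind of poles is missing then
`T(r, p) + T(r, q) = O(r²)`. -/
theorem stmt_9 (α β : ℂ) (p q : ℂ → ℂ) (h : IsHamSolution α β p q)
    (htr : ¬ IsRationalFn p) :
    (∀ ρ : ℂ, ρ ^ 3 = 1 →
      (fun r => setCount {z | IsPole p z ∧ HasResidue p z ρ} r
          - (1/3) * setCount {z | IsPole p z} r) =O[atTop] (fun r => r ^ 2)) ∧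
    ((∃ ρ : ℂ, ρ ^ 3 = 1 ∧ {z | IsPole p z ∧ HasResidue p z ρ}.Finite) →
      (fun r => nevT p r + nevT q r) =O[atTop] (fun r => r ^ 2)) :=
  (stmt_9_general h).imp_right fun hT ⟨ρ, hρ, hfin⟩ ↦
    hT ⟨ρ, hρ, HamSystem.setCount_isBigO_of_finite hfin⟩
end

section
/- Let α, β ∈ ℂ, let ρ ∈ ℂ satisfy ρ³ = 1, let U ⊆ ℂ be a nonempty connected open set, and let p, q be holomorphic on U and satisfy p′(z) = −q(z)² − z·p(z) − α and q′(z) = p(z)² + z·q(z) + β on U. Suppose ρ²·p(z) + ρ·q(z) − z = 0 for all z ∈ U. Then β = ρ·α + ρ² (equivalently ρ²·α − ρ·β + 1 = 0), p satisfies the Riccati equation p′(z) = −α − ρ·z² + z·p(z) − ρ²·p(z)² on U, and the Hamiltonian satisfies H(z) = (1/3)(p(z)³ + q(z)³) + z·p(z)·q(z) + β·p(z) + α·q(z) = z³/3 + ρ²·α·z + ρ²·p(z) on U. -/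
/-!
Along every solution the form `F = ρ²p + ρq - z` obeys the scalar linear equation
`F' = (ρ²p - ρq) F + (ρβ - ρ²α - 1)`, so `F ≡ 0` forces `ρβ - ρ²α - 1 = 0`. Writing `u = ρ²p` and
`v = ρq`, so that `F = u + v - z`, the other two claims hold because `F` divides the corresponding
differences: the one for the Riccati equation is `ρ((z - u)² - v²)`, and the one for the Hamiltonian
is `(u³ + v³ - z³ + 3uvz)/3 + ρ²αF` once `β = ρα + ρ²`.
-/

/-- The affine form `ρ²p + ρq - z`, whose vanishing is the constraint `ρ̄p + ρq - z = 0`; the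
conjugate of the cube root of unity `ρ` is written as `ρ²`, so that any ring is allowed. -/
def lineForm {R : Type*} [CommRing R] (ρ z p q : R) : R :=
  ρ ^ 2 * p + ρ * q - z

/-- The Hamiltonian of the system `p' = -q² - zp - α`, `q' = p² + zq + β`, that is, `p' = -∂H/∂q`
and `q' = ∂H/∂p`. -/
def cubicHamiltonian {K : Type*} [Field K] (α β z p q : K) : K :=
  (1 / 3 : K) * (p ^ 3 + q ^ 3) + z * p * q + β * p + α * q

section CommRing

variable {R : Type*} [CommRing R] {ρ : R}

theorem lineForm_velocity (hρ : ρ ^ 3 = 1) (α β z p q : R) :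
    ρ ^ 2 * (-q ^ 2 - z * p - α) + ρ * (p ^ 2 + z * q + β) - 1 =
      (ρ ^ 2 * p - ρ * q) * lineForm ρ z p q + (ρ * β - ρ ^ 2 * α - 1) := by
  unfold lineForm
  linear_combination -ρ * p ^ 2 * hρ

theorem parameter_relation_iff (hρ : ρ ^ 3 = 1) {α β : R} :
    ρ * β - ρ ^ 2 * α - 1 = 0 ↔ β = ρ * α + ρ ^ 2 := by
  constructor <;> intro h
  · linear_combination ρ ^ 2 * h + (ρ * α - β) * hρ
  · linear_combination ρ * h + hρ

theorem velocity_sub_riccati (hρ : ρ ^ 3 = 1) (α z p q : R) :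
    (-q ^ 2 - z * p - α) - (-α - ρ * z ^ 2 + z * p - ρ ^ 2 * p ^ 2) =
      -ρ * (z - ρ ^ 2 * p + ρ * q) * lineForm ρ z p q := by
  unfold lineForm
  linear_combination (q ^ 2 + 2 * z * p - ρ ^ 2 * p ^ 2) * hρ

theorem velocity_eq_riccati (hρ : ρ ^ 3 = 1) (α : R) {z p q : R} (hF : lineForm ρ z p q = 0) :
    -q ^ 2 - z * p - α = -α - ρ * z ^ 2 + z * p - ρ ^ 2 * p ^ 2 := by
  rw [← sub_eq_zero, velocity_sub_riccati hρ, hF, mul_zero]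

end CommRing

section Field

variable {K : Type*} [Field K] {ρ : K}

theorem cubicHamiltonian_sub_cubic (h3 : (3 : K) ≠ 0) (hρ : ρ ^ 3 = 1) (α z p q : K) :
    cubicHamiltonian α (ρ * α + ρ ^ 2) z p q - (z ^ 3 / 3 + ρ ^ 2 * α * z + ρ ^ 2 * p) =
      (((ρ ^ 2 * p) ^ 2 + (ρ * q) ^ 2 + z ^ 2 - ρ ^ 2 * p * (ρ * q) + ρ ^ 2 * p * z + ρ * q * z) / 3
        + ρ ^ 2 * α) * lineForm ρ z p q := by
  unfold cubicHamiltonian lineForm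
  linear_combination
    -((p ^ 3 * (ρ ^ 3 + 1) + q ^ 3) / 3 + z * p * q + ρ * α * p + α * q) * hρ
      - ρ ^ 3 * z * p * q * mul_inv_cancel₀ h3

theorem cubicHamiltonian_eq_cubic (h3 : (3 : K) ≠ 0) (hρ : ρ ^ 3 = 1) (α : K) {z p q : K}
    (hF : lineForm ρ z p q = 0) :
    cubicHamiltonian α (ρ * α + ρ ^ 2) z p q = z ^ 3 / 3 + ρ ^ 2 * α * z + ρ ^ 2 * p := by
  rw [← sub_eq_zero, cubicHamiltonian_sub_cubic h3 hρ, hF, mul_zero]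

end Field

section Solutions

variable {𝕜 : Type*} [NontriviallyNormedField 𝕜] {α β ρ z : 𝕜} {U : Set 𝕜} {p q : 𝕜 → 𝕜}

theorem hasDerivWithinAt_lineForm (hρ : ρ ^ 3 = 1)
    (hp : HasDerivWithinAt p (-(q z) ^ 2 - z * p z - α) U z)
    (hq : HasDerivWithinAt q ((p z) ^ 2 + z * q z + β) U z) :
    HasDerivWithinAt (fun w ↦ lineForm ρ w (p w) (q w))
      ((ρ ^ 2 * p z - ρ * q z) * lineForm ρ z (p z) (q z) + (ρ * β - ρ ^ 2 * α - 1)) U z := by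
  rw [← lineForm_velocity hρ]
  exact ((hp.const_mul (ρ ^ 2)).add (hq.const_mul ρ)).sub (hasDerivWithinAt_id z U)

theorem parameter_eq_of_lineForm_eq_zero (hρ : ρ ^ 3 = 1) (hz : z ∈ U)
    (hU : UniqueDiffWithinAt 𝕜 U z)
    (hp : HasDerivWithinAt p (-(q z) ^ 2 - z * p z - α) U z)
    (hq : HasDerivWithinAt q ((p z) ^ 2 + z * q z + β) U z)
    (hF : ∀ w ∈ U, lineForm ρ w (p w) (q w) = 0) :
    β = ρ * α + ρ ^ 2 := by
  have hF' := hasDerivWithinAt_lineForm hρ hp hq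
  rw [hF z hz, mul_zero, zero_add] at hF'
  have hzero : HasDerivWithinAt (fun w ↦ lineForm ρ w (p w) (q w)) 0 U z :=
    (hasDerivWithinAt_const z U 0).congr hF (hF z hz)
  exact (parameter_relation_iff hρ).mp (hU.eq_deriv U hF' hzero)

end Solutions

theorem stmt_15_general {𝕜 : Type*} [NontriviallyNormedField 𝕜] (h3 : (3 : 𝕜) ≠ 0)
    {α β ρ : 𝕜} (hρ : ρ ^ 3 = 1) {U : Set 𝕜} (hU : ∃ z ∈ U, UniqueDiffWithinAt 𝕜 U z)
    {p q : 𝕜 → 𝕜}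
    (hp : ∀ z ∈ U, HasDerivWithinAt p (-(q z) ^ 2 - z * p z - α) U z)
    (hq : ∀ z ∈ U, HasDerivWithinAt q ((p z) ^ 2 + z * q z + β) U z)
    (hF : ∀ z ∈ U, lineForm ρ z (p z) (q z) = 0) :
    β = ρ * α + ρ ^ 2 ∧
    (∀ z ∈ U, HasDerivWithinAt p (-α - ρ * z ^ 2 + z * p z - ρ ^ 2 * (p z) ^ 2) U z) ∧
    (∀ z ∈ U, cubicHamiltonian α β z (p z) (q z) = z ^ 3 / 3 + ρ ^ 2 * α * z + ρ ^ 2 * p z) := by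
  obtain ⟨z₀, hz₀, hU₀⟩ := hU
  have hβ : β = ρ * α + ρ ^ 2 :=
    parameter_eq_of_lineForm_eq_zero hρ hz₀ hU₀ (hp z₀ hz₀) (hq z₀ hz₀) hF
  refine ⟨hβ, fun z hz ↦ ?_, fun z hz ↦ ?_⟩
  · exact velocity_eq_riccati hρ α (hF z hz) ▸ hp z hz
  · exact hβ ▸ cubicHamiltonian_eq_cubic h3 hρ α (hF z hz)

/-- (Part of Theorem FK.) If a holomorphic solution `(p, q)` of the
Hamiltonian system on a nonempty connected open set `U` satisfies `ρ²p + ρq − z ≡ 0`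
(`ρ³ = 1`), then `β = ρα + ρ²`, `p` solves the Riccati equation
`p′ = −α − ρz² + zp − ρ²p²`, and the Hamiltonian equals `z³/3 + ρ²αz + ρ²p`. -/
theorem stmt_15 (α β ρ : ℂ) (hρ : ρ ^ 3 = 1) (U : Set ℂ) (hU : IsOpen U)
    (hconn : IsConnected U) (p q : ℂ → ℂ)
    (hp : DifferentiableOn ℂ p U) (hq : DifferentiableOn ℂ q U)
    (hp' : ∀ z ∈ U, deriv p z = -(q z) ^ 2 - z * p z - α)
    (hq' : ∀ z ∈ U, deriv q z = (p z) ^ 2 + z * q z + β)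
    (hrel : ∀ z ∈ U, ρ ^ 2 * p z + ρ * q z - z = 0) :
    β = ρ * α + ρ ^ 2 ∧
    (∀ z ∈ U, deriv p z = -α - ρ * z ^ 2 + z * p z - ρ ^ 2 * (p z) ^ 2) ∧
    (∀ z ∈ U, (1/3 : ℂ) * ((p z) ^ 3 + (q z) ^ 3) + z * p z * q z + β * p z + α * q z
      = z ^ 3 / 3 + ρ ^ 2 * α * z + ρ ^ 2 * p z) := by
  obtain ⟨hβ, hriccati, hH⟩ := stmt_15_general three_ne_zero hρ
    (hconn.nonempty.imp fun z hz ↦ ⟨hz, hU.uniqueDiffWithinAt hz⟩)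
    (fun z hz ↦ hp' z hz ▸ (hp.hasDerivAt (hU.mem_nhds hz)).hasDerivWithinAt)
    (fun z hz ↦ hq' z hz ▸ (hq.hasDerivAt (hU.mem_nhds hz)).hasDerivWithinAt) hrel
  exact ⟨hβ, fun z hz ↦ ((hriccati z hz).hasDerivAt (hU.mem_nhds hz)).deriv, hH⟩
end

section
/- Let α ∈ ℂ, let ρ ∈ ℂ satisfy ρ³ = 1, let U ⊆ ℂ be open, and let p be holomorphic on U and satisfy the Riccati equation p′(z) = −α − ρ·z² + z·p(z) − ρ²·p(z)² on U. Define q(z) = ρ²·z − ρ·p(z). Then the pair (p, q) satisfies the Hamiltonian system with parameters (α, ρ·α + ρ²), i.e. p′(z) = −q(z)² − z·p(z) − α and q′(z) = p(z)² + z·q(z) + (ρ·α + ρ²) on U; moreover ρ²·p(z) + ρ·q(z) − z = 0 on U. -/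
/-!
The choice of `q` is the affine relation `ρ²p + ρq = z` solved for `q`, using `ρ³ = 1`. Squaring it
gives `q² = ρz² − 2zp + ρ²p²`, which turns `−q² − zp − α` into the right-hand side of the Riccati
equation. Since `q′ = ρ² − ρp′`, multiplying that right-hand side by `−ρ` and using
`ρ³p² = p²` gives the second equation of the system, with `β = ρα + ρ²`.
-/

section CubeRootOfUnity

variable {R : Type*} [CommRing R] {ρ : R}

theorem affine_relation_of_cube_eq_one (hρ : ρ ^ 3 = 1) (z x : R) :
    ρ ^ 2 * x + ρ * (ρ ^ 2 * z - ρ * x) - z = 0 := by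
  linear_combination z * hρ

theorem sq_mul_sub_mul_sq_of_cube_eq_one (hρ : ρ ^ 3 = 1) (z x : R) :
    (ρ ^ 2 * z - ρ * x) ^ 2 = ρ * z ^ 2 - 2 * (z * x) + ρ ^ 2 * x ^ 2 := by
  linear_combination (ρ * z ^ 2 - 2 * (z * x)) * hρ

theorem sq_sub_mul_riccati_of_cube_eq_one (hρ : ρ ^ 3 = 1) (α z x : R) :
    ρ ^ 2 - ρ * (-α - ρ * z ^ 2 + z * x - ρ ^ 2 * x ^ 2) =
      x ^ 2 + z * (ρ ^ 2 * z - ρ * x) + (ρ * α + ρ ^ 2) := by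
  linear_combination x ^ 2 * hρ

end CubeRootOfUnity

section Solutions

variable {𝕜 : Type*} [NontriviallyNormedField 𝕜]

/-- `p` solves the Riccati equation `p′ = −α − ρz² + zp − ρ²p²` on `s`. Derivatives are taken
within `s`, which may be any set. -/
def IsRiccatiSolutionOn (α ρ : 𝕜) (p : 𝕜 → 𝕜) (s : Set 𝕜) : Prop :=
  ∀ z ∈ s, HasDerivWithinAt p (-α - ρ * z ^ 2 + z * p z - ρ ^ 2 * p z ^ 2) s z

/-- `(p, q)` solves the Hamiltonian system `p′ = −q² − zp − α`, `q′ = p² + zq + β` on `s`.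
Derivatives are taken within `s`, which may be any set. -/
structure IsHamiltonianSolutionOn (α β : 𝕜) (p q : 𝕜 → 𝕜) (s : Set 𝕜) : Prop where
  hasDerivWithinAt_fst : ∀ z ∈ s, HasDerivWithinAt p (-q z ^ 2 - z * p z - α) s z
  hasDerivWithinAt_snd : ∀ z ∈ s, HasDerivWithinAt q (p z ^ 2 + z * q z + β) s z

variable {α β ρ : 𝕜} {p q : 𝕜 → 𝕜} {s : Set 𝕜}

theorem isRiccatiSolutionOn_of_deriv (hs : IsOpen s) (hp : DifferentiableOn 𝕜 p s)
    (hric : ∀ z ∈ s, deriv p z = -α - ρ * z ^ 2 + z * p z - ρ ^ 2 * p z ^ 2) :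
    IsRiccatiSolutionOn α ρ p s := fun z hz =>
  hric z hz ▸ (hp.hasDerivAt (hs.mem_nhds hz)).hasDerivWithinAt

theorem IsHamiltonianSolutionOn.deriv_fst (h : IsHamiltonianSolutionOn α β p q s) (hs : IsOpen s)
    {z : 𝕜} (hz : z ∈ s) : deriv p z = -q z ^ 2 - z * p z - α :=
  ((h.hasDerivWithinAt_fst z hz).hasDerivAt (hs.mem_nhds hz)).deriv

theorem IsHamiltonianSolutionOn.deriv_snd (h : IsHamiltonianSolutionOn α β p q s) (hs : IsOpen s)
    {z : 𝕜} (hz : z ∈ s) : deriv q z = p z ^ 2 + z * q z + β :=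
  ((h.hasDerivWithinAt_snd z hz).hasDerivAt (hs.mem_nhds hz)).deriv

theorem IsRiccatiSolutionOn.isHamiltonianSolutionOn (h : IsRiccatiSolutionOn α ρ p s)
    (hρ : ρ ^ 3 = 1) :
    IsHamiltonianSolutionOn α (ρ * α + ρ ^ 2) p (fun z => ρ ^ 2 * z - ρ * p z) s where
  hasDerivWithinAt_fst z hz := by
    refine (h z hz).congr_deriv ?_
    rw [sq_mul_sub_mul_sq_of_cube_eq_one hρ]
    ring
  hasDerivWithinAt_snd z hz := by
    have hq := ((hasDerivWithinAt_id z s).const_mul (ρ ^ 2)).sub ((h z hz).const_mul ρ)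
    refine hq.congr_deriv ?_
    rw [mul_one, sq_sub_mul_riccati_of_cube_eq_one hρ]

theorem stmt_16_general (h : IsRiccatiSolutionOn α ρ p s) (hρ : ρ ^ 3 = 1) :
    IsHamiltonianSolutionOn α (ρ * α + ρ ^ 2) p (fun z => ρ ^ 2 * z - ρ * p z) s ∧
      ∀ z, ρ ^ 2 * p z + ρ * (ρ ^ 2 * z - ρ * p z) - z = 0 :=
  ⟨h.isHamiltonianSolutionOn hρ, fun z => affine_relation_of_cube_eq_one hρ z (p z)⟩

end Solutions

/-- (Part of Theorem FK.) If `p` solves the Riccati equation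
`p′ = −α − ρz² + zp − ρ²p²` (`ρ³ = 1`) on an open set `U` and `q = ρ²z − ρp`, then `(p, q)`
solves the Hamiltonian system with parameters `(α, ρα + ρ²)`, and `ρ²p + ρq − z ≡ 0`. -/
theorem stmt_16 (α ρ : ℂ) (hρ : ρ ^ 3 = 1) (U : Set ℂ) (hU : IsOpen U) (p : ℂ → ℂ)
    (hp : DifferentiableOn ℂ p U)
    (hric : ∀ z ∈ U, deriv p z = -α - ρ * z ^ 2 + z * p z - ρ ^ 2 * (p z) ^ 2) :
    (∀ z ∈ U, deriv p z = -(ρ ^ 2 * z - ρ * p z) ^ 2 - z * p z - α) ∧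
    (∀ z ∈ U, deriv (fun w => ρ ^ 2 * w - ρ * p w) z =
      (p z) ^ 2 + z * (ρ ^ 2 * z - ρ * p z) + (ρ * α + ρ ^ 2)) ∧
    (∀ z ∈ U, ρ ^ 2 * p z + ρ * (ρ ^ 2 * z - ρ * p z) - z = 0) := by
  obtain ⟨hsol, hrel⟩ := stmt_16_general (isRiccatiSolutionOn_of_deriv hU hp hric) hρ
  exact ⟨fun _ => hsol.deriv_fst hU, fun _ => hsol.deriv_snd hU, fun z _ => hrel z⟩
end
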